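/- Assume the curve setup with counterclockwise orientation and let a well distributed mesh with parameters κ ≥ 2 and M > 0 be given. Then there exist C > 0 and N₀ such that for every N ≥ N₀ and every z ∈ ℝ^N: |⟨(L/N)·B_N z⟩| + |⟨(L/N)·A_N z − π·z⟩| ≤ C·N^{−κ}·‖z‖_{ℓ¹} and |⟨(L/N)·B̃_N z⟩| + |⟨(L/N)·Ã_N z − π·z⟩| ≤ C·N^{−κ}·‖z‖_{ℓ¹}. -/

import Mathlib

open Real MeasureTheory

/-- Dot product of two points of the plane `ℝ² ≃ ℂ`. -/
noncomputable def dotR (z w : ℂ) : ℝ := z.re * w.re + z.im * w.im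

/-- The unit normal vector `n(s) = (l₂'(s), -l₁'(s))` of a curve `l`. -/
noncomputable def normalv (l : ℝ → ℂ) (s : ℝ) : ℂ := -Complex.I * deriv l s

/-- The discretized double layer matrix. -/
noncomputable def Amat (l : ℝ → ℂ) {N : ℕ} (a b : Fin N → ℝ) : Matrix (Fin N) (Fin N) ℝ :=
  Matrix.of fun i j => dotR (l (a i) - l (b j)) (normalv l (a i)) / ‖l (a i) - l (b j)‖ ^ 2

/-- The discretized singular (tangential) matrix. -/
noncomputable def Bmat (l : ℝ → ℂ) {N : ℕ} (a b : Fin N → ℝ) : Matrix (Fin N) (Fin N) ℝ :=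
  Matrix.of fun i j => dotR (l (a i) - l (b j)) (deriv l (a i)) / ‖l (a i) - l (b j)‖ ^ 2

/-- The mean value of a vector. -/
noncomputable def avg {N : ℕ} (z : Fin N → ℝ) : ℝ := (N : ℝ)⁻¹ * ∑ i, z i

/-- The normalized `ℓ¹` norm of a vector. -/
noncomputable def l1norm {N : ℕ} (z : Fin N → ℝ) : ℝ := (N : ℝ)⁻¹ * ∑ i, |z i|


/-- Differentiation under an interval integral depending smoothly on parameters. -/
lemma paramInt_hasFDerivAt (G : (ℝ × ℝ) → ℝ → ℂ) (hG : ContDiff ℝ (⊤ : ℕ∞) (Function.uncurry G))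
    (p : ℝ × ℝ) :
    HasFDerivAt (fun p => ∫ x in (0:ℝ)..1, G p x)
      (∫ x in (0:ℝ)..1, fderiv ℝ (fun q => G q x) p) p := by
  have hcont : Continuous (Function.uncurry G) := hG.continuous
  have hd : ∀ q x, HasFDerivAt (fun q => G q x)
      ((fderiv ℝ (Function.uncurry G) (q, x)).comp (ContinuousLinearMap.inl ℝ (ℝ × ℝ) ℝ)) q := by
    intro q x
    have h1 : HasFDerivAt (Function.uncurry G) (fderiv ℝ (Function.uncurry G) (q, x)) (q, x) :=
      (hG.differentiable (by simp) _).hasFDerivAt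
    exact HasFDerivAt.comp (f := fun e : ℝ × ℝ => (e, x)) q h1 (hasFDerivAt_prodMk_left (𝕜 := ℝ) q x)
  have hF' : Continuous (fun z : (ℝ × ℝ) × ℝ =>
      (fderiv ℝ (Function.uncurry G) z).comp (ContinuousLinearMap.inl ℝ (ℝ × ℝ) ℝ)) :=
    (hG.continuous_fderiv (by simp)).clm_comp continuous_const
  have e : ∀ q x, fderiv ℝ (fun q => G q x) q =
      (fderiv ℝ (Function.uncurry G) (q, x)).comp (ContinuousLinearMap.inl ℝ (ℝ × ℝ) ℝ) :=
    fun q x => (hd q x).fderiv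
  simp_rw [e]
  obtain ⟨B, hB⟩ := ((isCompact_closedBall p 1).prod (isCompact_Icc (a := (0:ℝ)) (b := 1))).exists_bound_of_continuousOn
    hF'.continuousOn
  refine hasFDerivAt_integral_of_dominated_of_fderiv_le'' (s := Metric.closedBall p 1)
    (F' := fun q x => (fderiv ℝ (Function.uncurry G) (q, x)).comp (ContinuousLinearMap.inl ℝ (ℝ × ℝ) ℝ))
    (bound := fun _ => B)
    (Metric.closedBall_mem_nhds p one_pos) ?_ ?_ ?_ ?_ ?_ ?_
  · exact Filter.Eventually.of_forall fun q =>
      (hcont.comp (by fun_prop : Continuous fun x : ℝ => (q, x))).aestronglyMeasurable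
  · exact (hcont.comp (by fun_prop : Continuous fun x : ℝ => (p, x))).intervalIntegrable _ _
  · exact (hF'.comp (by fun_prop : Continuous fun x : ℝ => (p, x))).aestronglyMeasurable
  · refine (ae_restrict_iff' measurableSet_uIoc).2 (Filter.Eventually.of_forall ?_)
    intro x hx q hq
    rw [Set.uIoc_of_le zero_le_one] at hx
    exact hB (q, x) ⟨hq, hx.1.le, hx.2⟩
  · simp
  · exact Filter.Eventually.of_forall fun x q _ => hd q x

lemma paramInt_contDiff (n : ℕ) : ∀ (G : (ℝ × ℝ) → ℝ → ℂ),
    ContDiff ℝ (⊤ : ℕ∞) (Function.uncurry G) →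
    ContDiff ℝ n (fun p => ∫ x in (0:ℝ)..1, G p x) := by
  induction n with
  | zero =>
    intro G hG
    have : Continuous (fun p => ∫ x in (0:ℝ)..1, G p x) :=
      intervalIntegral.continuous_parametric_intervalIntegral_of_continuous' hG.continuous _ _
    exact_mod_cast (contDiff_zero (𝕜 := ℝ)).2 this
  | succ n ih =>
    intro G hG
    have key := paramInt_hasFDerivAt G hG
    push_cast
    rw [contDiff_succ_iff_fderiv_apply]
    refine ⟨fun p => (key p).differentiableAt, by simp, fun y => ?_⟩
    have hd : ∀ q x, HasFDerivAt (fun q => G q x)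
        ((fderiv ℝ (Function.uncurry G) (q, x)).comp (ContinuousLinearMap.inl ℝ (ℝ × ℝ) ℝ)) q := by
      intro q x
      have h1 : HasFDerivAt (Function.uncurry G) (fderiv ℝ (Function.uncurry G) (q, x)) (q, x) :=
        (hG.differentiable (by simp) _).hasFDerivAt
      exact HasFDerivAt.comp (f := fun e : ℝ × ℝ => (e, x)) q h1 (hasFDerivAt_prodMk_left (𝕜 := ℝ) q x)
    have hF' : Continuous (fun z : (ℝ × ℝ) × ℝ =>
        (fderiv ℝ (Function.uncurry G) z).comp (ContinuousLinearMap.inl ℝ (ℝ × ℝ) ℝ)) :=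
      (hG.continuous_fderiv (by simp)).clm_comp continuous_const
    have e : (fun p => fderiv ℝ (fun p => ∫ x in (0:ℝ)..1, G p x) p y) =
        fun p => ∫ x in (0:ℝ)..1, fderiv ℝ (Function.uncurry G) (p, x) (y, 0) := by
      funext p
      rw [(key p).fderiv, ContinuousLinearMap.intervalIntegral_apply]
      · simp_rw [(hd p _).fderiv]
        simp
      · simp_rw [(hd p _).fderiv]
        exact (hF'.comp (by fun_prop : Continuous fun x : ℝ => (p, x))).intervalIntegrable _ _
    rw [e]
    apply ih (fun p x => fderiv ℝ (Function.uncurry G) (p, x) (y, 0))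
    exact (hG.fderiv_right (m := (⊤ : ℕ∞)) (by simp)).clm_apply contDiff_const

/-- High order accuracy of equidistant sums of periodic functions. -/
lemma quad_periodic (L : ℝ) (hL : 0 < L) (N : ℕ) (hN : 0 < N) (C : ℝ) (m : ℕ) :
    ∀ (g : ℕ → ℝ → ℂ), (∀ j x, HasDerivAt (g j) (g (j + 1) x) x) →
    (∀ j, Function.Periodic (g j) L) → (∀ x, ‖g m x‖ ≤ C) → ∀ x,
    ‖(N : ℂ)⁻¹ * ∑ k ∈ Finset.range N, g 0 (x + k * (L / N))
      - (L : ℂ)⁻¹ * ∫ y in (0:ℝ)..L, g 0 y‖ ≤ 2 * C * (L / N) ^ m := by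
  have hNr : (0:ℝ) < N := by exact_mod_cast hN
  have hNc : (N:ℂ) ≠ 0 := by exact_mod_cast hN.ne'
  have hLc : (L:ℂ) ≠ 0 := by exact_mod_cast hL.ne'
  set h := L / N with hh
  have hpos : 0 < h := by positivity
  have hNh : N * h = L := by rw [hh]; field_simp
  induction m with
  | zero =>
    intro g hg hp hC x
    have h1 : ‖(N : ℂ)⁻¹ * ∑ k ∈ Finset.range N, g 0 (x + k * h)‖ ≤ C := by
      rw [norm_mul, norm_inv, Complex.norm_natCast, inv_mul_le_iff₀ hNr]
      calc _ ≤ ∑ k ∈ Finset.range N, C := norm_sum_le_of_le _ fun k _ => hC _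
        _ = N * C := by simp
    have h2 : ‖(L : ℂ)⁻¹ * ∫ y in (0:ℝ)..L, g 0 y‖ ≤ C := by
      rw [norm_mul, norm_inv, Complex.norm_real, Real.norm_of_nonneg hL.le, inv_mul_le_iff₀ hL]
      have := intervalIntegral.norm_integral_le_of_norm_le_const (a := 0) (b := L) (f := g 0) (C := C) fun x _ => hC x
      rw [sub_zero, abs_of_pos hL] at this
      linarith
    calc _ ≤ _ := norm_sub_le _ _
      _ ≤ _ := by rw [pow_zero]; linarith
  | succ m ih =>
    intro g hg hp hC x
    have hcont : ∀ j, Continuous (g j) := fun j =>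
      continuous_iff_continuousAt.2 fun x => (hg j x).continuousAt
    have hmean : ∫ y in (0:ℝ)..L, g 1 y = 0 := by
      rw [intervalIntegral.integral_eq_sub_of_hasDerivAt (f := g 0) (fun x _ => hg 0 x)
        ((hcont 1).intervalIntegrable _ _)]
      have := hp 0 0
      simp only [zero_add] at this
      rw [this, sub_self]
    have IH := ih (fun j => g (j + 1)) (fun j x => hg _ x) (fun j => hp _) hC
    simp only [zero_add, hmean, mul_zero, sub_zero] at IH
    set u : ℝ → ℂ := fun x => (N : ℂ)⁻¹ * ∑ k ∈ Finset.range N, g 0 (x + k * h)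
      - (L : ℂ)⁻¹ * ∫ y in (0:ℝ)..L, g 0 y with hu
    have hud : ∀ x, HasDerivAt u ((N : ℂ)⁻¹ * ∑ k ∈ Finset.range N, g 1 (x + k * h)) x := by
      intro x
      refine HasDerivAt.sub_const _ (HasDerivAt.const_mul _ ?_)
      refine HasDerivAt.fun_sum fun k _ => ?_
      exact (hg 0 (x + k * h)).comp_add_const x (k * h)
    have huc : Continuous u := continuous_iff_continuousAt.2 fun x => (hud x).continuousAt
    have hInt0 : ∫ y in x..(x + h), u y = 0 := by
      rw [hu, intervalIntegral.integral_sub, intervalIntegral.integral_const_mul,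
        intervalIntegral.integral_finsetSum]
      · have e : ∀ k ∈ Finset.range N, ∫ y in x..(x+h), g 0 (y + k * h) =
            ∫ y in (x + (k:ℕ) * h)..(x + ((k+1 : ℕ)) * h), g 0 y := by
          intro k _
          rw [intervalIntegral.integral_comp_add_right]
          congr 1
          push_cast; ring
        rw [Finset.sum_congr rfl e]
        rw [intervalIntegral.sum_integral_adjacent_intervals (a := fun k : ℕ => x + k * h)
          (fun k _ => (hcont 0).intervalIntegrable _ _)]
        simp only [Nat.cast_zero, zero_mul, add_zero, hNh]
        rw [(hp 0).intervalIntegral_add_eq x 0, zero_add, intervalIntegral.integral_const]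
        rw [add_sub_cancel_left, Complex.real_smul, hh]
        push_cast
        field_simp
        ring
      · intro k _
        exact ((hcont 0).comp (by fun_prop)).intervalIntegrable _ _
      · refine Continuous.intervalIntegrable ?_ _ _
        have := hcont 0
        fun_prop
      · exact intervalIntegrable_const
    have hb : ∀ y ∈ Set.uIoc x (x + h), ‖u x - u y‖ ≤ 2 * C * h ^ m * h := by
      intro y hy
      rw [Set.uIoc_of_le (by linarith)] at hy
      have := Convex.norm_image_sub_le_of_norm_hasDerivWithin_le (f := u) (s := Set.univ)
        (fun z _ => (hud z).hasDerivWithinAt) (fun z _ => IH z) convex_univ (Set.mem_univ y) (Set.mem_univ x)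
      refine this.trans ?_
      have hC0 : 0 ≤ 2 * C * h ^ m := (norm_nonneg _).trans (IH x)
      apply mul_le_mul_of_nonneg_left _ hC0
      rw [Real.norm_eq_abs, abs_le]; constructor <;> linarith [hy.1, hy.2]
    have h3 := intervalIntegral.norm_integral_le_of_norm_le_const hb
    rw [intervalIntegral.integral_sub (by simp) (huc.intervalIntegrable _ _), hInt0, sub_zero,
      intervalIntegral.integral_const, add_sub_cancel_left, norm_smul, abs_of_pos hpos,
      Real.norm_of_nonneg hpos.le] at h3
    have h4 : ‖u x‖ ≤ 2 * C * h ^ m * h := by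
      rw [mul_comm] at h3
      exact le_of_mul_le_mul_right h3 hpos
    calc _ ≤ _ := h4
      _ = _ := by ring

/-- Linear ODE. -/
lemma ode_exp (f k : ℝ → ℂ) (a b : ℝ) (hab : a ≤ b) (hk : Continuous k)
    (hf : ∀ x ∈ Set.Icc a b, HasDerivAt f (k x * f x) x) :
    f b = f a * Complex.exp (∫ x in a..b, k x) := by
  have hd : ∀ x ∈ Set.Icc a b, HasDerivAt
      (fun x => f x * Complex.exp (-∫ y in a..x, k y)) 0 x := by
    intro x hx
    have h1 : HasDerivAt (fun x => ∫ y in a..x, k y) (k x) x :=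
      intervalIntegral.integral_hasDerivAt_right (hk.intervalIntegrable _ _)
        (hk.stronglyMeasurableAtFilter _ _) hk.continuousAt
    have h2 := (hf x hx).mul h1.neg.cexp
    refine h2.congr_deriv ?_
    simp only [Pi.neg_apply]
    ring
  have h3 := constant_of_has_deriv_right_zero (a := a) (b := b)
    (fun x hx => (hd x hx).continuousAt.continuousWithinAt)
    (fun x hx => (hd x ⟨hx.1, hx.2.le⟩).hasDerivWithinAt) b ⟨hab, le_rfl⟩
  simp only [intervalIntegral.integral_same, neg_zero, Complex.exp_zero, mul_one] at h3
  rw [← h3, mul_assoc, ← Complex.exp_add]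
  simp

lemma int_of_ode (f k : ℝ → ℂ) (a b : ℝ) (hab : a ≤ b) (hk : Continuous k)
    (hf : ∀ x ∈ Set.Icc a b, HasDerivAt f (k x * f x) x) (h0 : f a ≠ 0) (he : f b = f a) :
    ∃ n : ℤ, ∫ x in a..b, k x = n * (2 * π * Complex.I) := by
  have := ode_exp f k a b hab hk hf
  rw [he] at this
  apply Complex.exp_eq_one_iff.1
  exact mul_left_cancel₀ h0 (by rw [← this, mul_one])

/-- continuous functions with values in `2πiℤ` are constant. -/
lemma const_of_int (f : ℝ → ℂ) (S : Set ℝ) (hS : IsPreconnected S) (hf : ContinuousOn f S)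
    (hi : ∀ x ∈ S, ∃ n : ℤ, f x = n * (2 * π * Complex.I)) (x y : ℝ) (hx : x ∈ S) (hy : y ∈ S) :
    f x = f y := by
  have hpi := Real.pi_pos
  have hg : ContinuousOn (fun x => (f x).im / (2 * π)) S :=
    (Complex.continuous_im.comp_continuousOn hf).div_const _
  have hmaps : ∀ x ∈ S, ∃ n : ℤ, (n:ℝ) = (f x).im / (2 * π) ∧ f x = n * (2 * π * Complex.I) := by
    intro x hx
    obtain ⟨n, hn⟩ := hi x hx
    refine ⟨n, ?_, hn⟩
    rw [hn]
    simp
  have hpre := hS.image _ hg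
  obtain ⟨n, hn, hn'⟩ := hmaps x hx
  obtain ⟨m, hm, hm'⟩ := hmaps y hy
  by_contra hne
  have hnm : n ≠ m := by
    rintro rfl; exact hne (hn'.trans hm'.symm)
  have hord := hpre.ordConnected
  have aux : ∀ a b : ℤ, a < b → (a:ℝ) ∈ Set.image (fun x => (f x).im / (2 * π)) S →
      (b:ℝ) ∈ Set.image (fun x => (f x).im / (2 * π)) S → False := by
    intro a b hab ha hb
    have hab' : (a:ℝ) + 1 ≤ b := by exact_mod_cast hab
    have : (a:ℝ) + 1/2 ∈ Set.image (fun x => (f x).im / (2 * π)) S := hord.out ha hb ⟨by linarith, by linarith⟩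
    obtain ⟨z, hz, hz'⟩ := this
    obtain ⟨c, hc, -⟩ := hmaps z hz
    simp only at hz'
    rw [← hc] at hz'
    have h2 : (2 * c : ℤ) = 2 * a + 1 := by
      have : (2 * c : ℝ) = 2 * a + 1 := by linarith
      exact_mod_cast this
    omega
  have hnS : (n:ℝ) ∈ Set.image (fun x => (f x).im / (2 * π)) S := ⟨x, hx, hn.symm⟩
  have hmS : (m:ℝ) ∈ Set.image (fun x => (f x).im / (2 * π)) S := ⟨y, hy, hm.symm⟩
  rcases lt_or_gt_of_ne hnm with h | h
  · exact aux _ _ h hnS hmS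
  · exact aux _ _ h hmS hnS

/-- shift invariance of sums of periodic functions over a period. -/
lemma sum_shift {X : Type*} [AddCommGroup X] (N : ℕ) (ψ : ℤ → X) (hψ : ∀ k, ψ (k + N) = ψ k) (j : ℤ) :
    ∑ i ∈ Finset.range N, ψ (i - j) = ∑ i ∈ Finset.range N, ψ i := by
  have step : ∀ j : ℤ, ∑ i ∈ Finset.range N, ψ (i - (j + 1)) = ∑ i ∈ Finset.range N, ψ (i - j) := by
    intro j
    have h1 := Finset.sum_range_succ (fun i : ℕ => ψ (i - (j + 1))) N
    have h2 := Finset.sum_range_succ' (fun i : ℕ => ψ (i - (j + 1))) N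
    rw [h1] at h2
    have e1 : ψ ((N:ℤ) - (j+1)) = ψ (((0:ℕ):ℤ) - (j+1)) := by
      rw [← hψ (((0:ℕ):ℤ) - (j+1))]; congr 1; push_cast; ring
    rw [e1] at h2
    rw [add_right_cancel h2]
    apply Finset.sum_congr rfl
    intro i _
    congr 1; push_cast; ring
  induction j using Int.induction_on with
  | zero => simp
  | succ i ih => rw [step, ih]
  | pred i ih => rw [← ih, ← step]; simp


/-- Smooth regular simple closed curves. -/
structure Crv (L : ℝ) (l : ℝ → ℂ) : Prop where
  sm : ContDiff ℝ (⊤ : ℕ∞) l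
  per : ∀ s, l (s + L) = l s
  inj : ∀ t u, l (t + u) = l t → ∃ n : ℤ, u = n * L
  dne : ∀ s, deriv l s ≠ 0

/-- Divided difference. -/
noncomputable def DD (l : ℝ → ℂ) (p : ℝ × ℝ) : ℂ := ∫ x in (0:ℝ)..1, deriv l (p.2 + x * p.1)

/-- Logarithmic derivative of the divided difference. -/
noncomputable def RR (l : ℝ → ℂ) (p : ℝ × ℝ) : ℂ := fderiv ℝ (DD l) p (1, 0) / DD l p

/-- The complex kernel. -/
noncomputable def QQ (l : ℝ → ℂ) (p : ℝ × ℝ) : ℂ := deriv l (p.2 + p.1) / (l (p.2 + p.1) - l p.2)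

open Classical in
/-- Difference of the kernels of two curves. -/
noncomputable def KK (L : ℝ) (l₁ l₂ : ℝ → ℂ) (p : ℝ × ℝ) : ℂ :=
  if ∃ n : ℤ, p.1 = n * L then RR l₁ (0, p.2) - RR l₂ (0, p.2) else QQ l₁ p - QQ l₂ p

lemma smooth_deriv {l : ℝ → ℂ} (h : ContDiff ℝ (⊤ : ℕ∞) l) : ContDiff ℝ (⊤ : ℕ∞) (deriv l) :=
  (contDiff_infty_iff_deriv.1 h).2

lemma DD_smooth {l : ℝ → ℂ} (h : ContDiff ℝ (⊤ : ℕ∞) l) : ContDiff ℝ (⊤ : ℕ∞) (DD l) := by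
  refine contDiff_infty.2 fun n => paramInt_contDiff n (fun p x => deriv l (p.2 + x * p.1)) ?_
  refine (smooth_deriv h).comp (g := deriv l) (f := fun z : (ℝ × ℝ) × ℝ => z.1.2 + z.2 * z.1.1) ?_
  fun_prop

lemma hasDerivAt_of_smooth {l : ℝ → ℂ} (h : ContDiff ℝ (⊤ : ℕ∞) l) (s : ℝ) :
    HasDerivAt l (deriv l s) s := (h.differentiable (by simp) s).hasDerivAt

lemma DD_mul {l : ℝ → ℂ} (h : ContDiff ℝ (⊤ : ℕ∞) l) (u t : ℝ) :
    (u : ℂ) * DD l (u, t) = l (t + u) - l t := by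
  have hc := (smooth_deriv h).continuous
  have := intervalIntegral.integral_eq_sub_of_hasDerivAt (a := 0) (b := 1)
    (f := fun x : ℝ => l (t + x * u)) (f' := fun x => (u:ℂ) * deriv l (t + x * u)) ?_ ?_
  · rw [intervalIntegral.integral_const_mul] at this
    rw [DD, this]; simp
  · intro x _
    have h1 : HasDerivAt (fun x : ℝ => t + x * u) u x := by
      simpa using ((hasDerivAt_id x).mul_const u).const_add t
    have := (hasDerivAt_of_smooth h (t + x * u)).scomp x h1
    rw [Complex.real_smul] at this
    exact this
  · exact Continuous.intervalIntegrable (by fun_prop) _ _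

lemma DD_zero (l : ℝ → ℂ) (t : ℝ) : DD l (0, t) = deriv l t := by
  simp [DD]

lemma DD_ne {L : ℝ} {l : ℝ → ℂ} (hL : 0 < L) (h : Crv L l) {p : ℝ × ℝ} (hp : |p.1| < L) :
    DD l p ≠ 0 := by
  obtain ⟨u, t⟩ := p
  by_cases hu : u = 0
  · subst hu; rw [DD_zero]; exact h.dne t
  · intro h0
    have := DD_mul h.sm u t
    rw [h0, mul_zero] at this
    obtain ⟨n, hn⟩ := h.inj t u (sub_eq_zero.1 this.symm)
    simp only at hp
    have hn0 : n ≠ 0 := by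
      rintro rfl; simp at hn; exact hu hn
    have : (1:ℝ) ≤ |(n:ℝ)| := by exact_mod_cast Int.one_le_abs hn0
    rw [hn, abs_mul, abs_of_pos hL] at hp
    nlinarith

lemma hasDerivAt_fst {f : ℝ × ℝ → ℂ} {u t : ℝ} (h : DifferentiableAt ℝ f (u, t)) :
    HasDerivAt (fun u => f (u, t)) (fderiv ℝ f (u, t) (1, 0)) u := by
  have h1 : HasDerivAt (fun u : ℝ => (u, t)) ((1:ℝ), (0:ℝ)) u :=
    (hasDerivAt_id u).prodMk (hasDerivAt_const u t)
  exact h.hasFDerivAt.comp_hasDerivAt u h1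

lemma DD_hasDeriv {l : ℝ → ℂ} (h : ContDiff ℝ (⊤ : ℕ∞) l) (u t : ℝ) :
    HasDerivAt (fun u => DD l (u, t)) (fderiv ℝ (DD l) (u, t) (1, 0)) u :=
  hasDerivAt_fst ((DD_smooth h).differentiable (by simp) _)

lemma DD_rel {l : ℝ → ℂ} (h : ContDiff ℝ (⊤ : ℕ∞) l) (u t : ℝ) :
    DD l (u, t) + u * fderiv ℝ (DD l) (u, t) (1, 0) = deriv l (t + u) := by
  have h1 : HasDerivAt (fun u : ℝ => (u : ℂ) * DD l (u, t))
      (1 * DD l (u, t) + u * fderiv ℝ (DD l) (u, t) (1, 0)) u :=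
    (Complex.ofRealCLM.hasDerivAt (x := u)).mul (DD_hasDeriv h u t)
  have e : (fun u : ℝ => (u : ℂ) * DD l (u, t)) = fun u => l (t + u) - l t :=
    funext fun u => DD_mul h u t
  rw [e, one_mul] at h1
  exact h1.unique (((hasDerivAt_of_smooth h (t + u)).comp_const_add t u).sub_const _)

lemma QQ_eq {L : ℝ} {l : ℝ → ℂ} (hL : 0 < L) (h : Crv L l) {u t : ℝ} (hp : |u| < L) (hu : u ≠ 0) :
    QQ l (u, t) = 1 / u + RR l (u, t) := by
  have h1 := DD_ne hL h (p := (u, t)) hp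
  have hu' : (u:ℂ) ≠ 0 := by exact_mod_cast hu
  rw [QQ, RR, ← DD_rel h.sm, ← DD_mul h.sm]
  field_simp

lemma RR_smooth {L : ℝ} {l : ℝ → ℂ} (hL : 0 < L) (h : Crv L l) {p : ℝ × ℝ} (hp : |p.1| < L) :
    ContDiffAt ℝ (⊤ : ℕ∞) (RR l) p := by
  have h1 := DD_smooth h.sm
  have h2 : ContDiff ℝ (⊤ : ℕ∞) (fun p => fderiv ℝ (DD l) p (1, 0)) :=
    (h1.fderiv_right (m := (⊤ : ℕ∞)) (by simp)).clm_apply contDiff_const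
  have h3 : RR l = fun p => fderiv ℝ (DD l) p (1, 0) * (DD l p)⁻¹ := by
    funext p; rw [RR, div_eq_mul_inv]
  rw [h3]
  exact h2.contDiffAt.mul (h1.contDiffAt.inv (DD_ne hL h hp))

lemma KK_eq {L : ℝ} {l₁ l₂ : ℝ → ℂ} (hL : 0 < L) (h₁ : Crv L l₁) (h₂ : Crv L l₂) {p : ℝ × ℝ}
    (hp : |p.1| < L) : KK L l₁ l₂ p = RR l₁ p - RR l₂ p := by
  obtain ⟨u, t⟩ := p
  rw [KK]
  split_ifs with h
  · obtain ⟨n, hn⟩ := h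
    simp only at hn hp
    have hn0 : n = 0 := by
      by_contra hne
      have : (1:ℝ) ≤ |(n:ℝ)| := by exact_mod_cast Int.one_le_abs hne
      rw [hn, abs_mul, abs_of_pos hL] at hp
      nlinarith
    subst hn0
    simp at hn
    simp [hn]
  · have hu : u ≠ 0 := by
      rintro rfl; exact h ⟨0, by simp⟩
    rw [QQ_eq hL h₁ hp hu, QQ_eq hL h₂ hp hu]
    ring

lemma deriv_per {L : ℝ} {l : ℝ → ℂ} (h : ∀ s, l (s + L) = l s) (s : ℝ) :
    deriv l (s + L) = deriv l s := by
  rw [← deriv_comp_add_const l L s]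
  congr 1
  exact funext h

lemma KK_per1 {L : ℝ} {l₁ l₂ : ℝ → ℂ} (h₁ : Crv L l₁) (h₂ : Crv L l₂) (p : ℝ × ℝ) :
    KK L l₁ l₂ (p + (L, 0)) = KK L l₁ l₂ p := by
  obtain ⟨u, t⟩ := p
  have e : (∃ n : ℤ, u + L = n * L) ↔ ∃ n : ℤ, u = n * L := by
    constructor
    · rintro ⟨n, hn⟩; exact ⟨n - 1, by push_cast; linarith⟩
    · rintro ⟨n, hn⟩; exact ⟨n + 1, by push_cast; linarith⟩
  simp only [KK, QQ, Prod.mk_add_mk, add_zero, ← add_assoc, h₁.per, h₂.per, deriv_per h₁.per,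
    deriv_per h₂.per]
  classical
  exact if_congr e rfl rfl

lemma DD_per2 {L : ℝ} {l : ℝ → ℂ} (h : ∀ s, l (s + L) = l s) (p : ℝ × ℝ) :
    DD l (p + (0, L)) = DD l p := by
  obtain ⟨u, t⟩ := p
  simp only [DD, Prod.mk_add_mk, add_zero]
  congr 1
  funext x
  rw [add_right_comm, deriv_per h]

lemma fderiv_per {f : ℝ × ℝ → ℂ} {v : ℝ × ℝ} (h : ∀ p, f (p + v) = f p) (p : ℝ × ℝ) :
    fderiv ℝ f (p + v) = fderiv ℝ f p := by
  rw [← fderiv_comp_add_right v]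
  congr 1
  exact funext h

lemma RR_per2 {L : ℝ} {l : ℝ → ℂ} (h : ∀ s, l (s + L) = l s) (p : ℝ × ℝ) :
    RR l (p + (0, L)) = RR l p := by
  rw [RR, RR, DD_per2 h, fderiv_per (DD_per2 h)]

lemma KK_per2 {L : ℝ} {l₁ l₂ : ℝ → ℂ} (h₁ : Crv L l₁) (h₂ : Crv L l₂) (p : ℝ × ℝ) :
    KK L l₁ l₂ (p + (0, L)) = KK L l₁ l₂ p := by
  obtain ⟨u, t⟩ := p
  have e1 := RR_per2 h₁.per (0, t)
  have e2 := RR_per2 h₂.per (0, t)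
  simp only [Prod.mk_add_mk, add_zero] at e1 e2
  simp only [KK, QQ, Prod.mk_add_mk, add_zero, e1, e2, add_right_comm _ L, h₁.per, h₂.per,
    deriv_per h₁.per, deriv_per h₂.per]
  classical
  exact if_congr (by simp) rfl rfl

lemma KK_smooth {L : ℝ} {l₁ l₂ : ℝ → ℂ} (hL : 0 < L) (h₁ : Crv L l₁) (h₂ : Crv L l₂) :
    ContDiff ℝ (⊤ : ℕ∞) (KK L l₁ l₂) := by
  have h0 : ∀ p : ℝ × ℝ, |p.1| < L → ContDiffAt ℝ (⊤ : ℕ∞) (KK L l₁ l₂) p := by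
    intro p hp
    refine ((RR_smooth hL h₁ hp).sub (RR_smooth hL h₂ hp)).congr_of_eventuallyEq ?_
    have : ∀ᶠ q : ℝ × ℝ in nhds p, |q.1| < L :=
      (isOpen_lt (by fun_prop) continuous_const).mem_nhds hp
    filter_upwards [this] with q hq using KK_eq hL h₁ h₂ hq
  rw [contDiff_iff_contDiffAt]
  intro p
  have hper : ∀ (n : ℤ) (q : ℝ × ℝ), KK L l₁ l₂ (q - ((n:ℝ) * L, 0)) = KK L l₁ l₂ q := by
    intro n
    induction n using Int.induction_on with
    | zero => intro q; simp [Prod.mk_zero_zero]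
    | succ i ih =>
      intro q
      rw [← KK_per1 h₁ h₂, ← ih q]
      congr 1
      ext <;> simp; ring
    | pred i ih =>
      intro q
      rw [← ih q, ← KK_per1 h₁ h₂ (q - ((((-(i:ℤ) : ℤ)):ℝ) * L, 0))]
      congr 1
      ext <;> simp; ring
  set n := ⌊p.1 / L⌋ with hn
  have hq : |(p - ((n:ℝ) * L, (0:ℝ))).1| < L := by
    simp only [Prod.fst_sub]
    have a1 := Int.floor_le (p.1 / L)
    have a2 := Int.lt_floor_add_one (p.1 / L)
    rw [← hn] at a1 a2
    rw [le_div_iff₀ hL] at a1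
    rw [div_lt_iff₀ hL] at a2
    rw [abs_lt]
    constructor <;> nlinarith
  have h3 := (h0 _ hq).comp p (f := fun q : ℝ × ℝ => q - ((n:ℝ) * L, (0:ℝ))) (by fun_prop)
  convert h3 using 1
  funext q
  exact (hper n q).symm

/-- Derivative in the first variable. -/
noncomputable def PP (f : ℝ × ℝ → ℂ) : ℝ × ℝ → ℂ := fun p => fderiv ℝ f p (1, 0)

lemma PP_iter (f : ℝ × ℝ → ℂ) (hf : ContDiff ℝ (⊤ : ℕ∞) f) (L : ℝ)
    (p1 : ∀ p, f (p + (L, 0)) = f p) (p2 : ∀ p, f (p + (0, L)) = f p) (j : ℕ) :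
    ContDiff ℝ (⊤ : ℕ∞) (PP^[j] f) ∧ (∀ p, (PP^[j] f) (p + (L, 0)) = (PP^[j] f) p) ∧
      (∀ p, (PP^[j] f) (p + (0, L)) = (PP^[j] f) p) := by
  induction j with
  | zero => exact ⟨hf, p1, p2⟩
  | succ j ih =>
    obtain ⟨a, b, c⟩ := ih
    rw [Function.iterate_succ', Function.comp_apply]
    refine ⟨(a.fderiv_right (m := (⊤ : ℕ∞)) (by simp)).clm_apply contDiff_const, fun p => ?_, fun p => ?_⟩
    · rw [PP, fderiv_per b]; rfl
    · rw [PP, fderiv_per c]; rfl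

lemma bounded_per (f : ℝ × ℝ → ℂ) (hf : Continuous f) (L : ℝ) (hL : 0 < L)
    (p1 : ∀ p, f (p + (L, 0)) = f p) (p2 : ∀ p, f (p + (0, L)) = f p) :
    ∃ C, ∀ p, ‖f p‖ ≤ C := by
  obtain ⟨C, hC⟩ := ((isCompact_Icc (a := (0:ℝ)) (b := L)).prod
    (isCompact_Icc (a := (0:ℝ)) (b := L))).exists_bound_of_continuousOn hf.continuousOn
  refine ⟨C, fun ⟨u, t⟩ => ?_⟩
  have q1 : ∀ t, Function.Periodic (fun u => f (u, t)) L := fun t u => by simpa using p1 (u, t)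
  have q2 : ∀ u, Function.Periodic (fun t => f (u, t)) L := fun u t => by simpa using p2 (u, t)
  obtain ⟨u', hu', e1⟩ := (q1 t).exists_mem_Ico₀ hL u
  obtain ⟨t', ht', e2⟩ := (q2 u').exists_mem_Ico₀ hL t
  rw [show f (u, t) = f (u', t) from e1, show f (u', t) = f (u', t') from e2]
  exact hC _ ⟨⟨hu'.1, hu'.2.le⟩, ⟨ht'.1, ht'.2.le⟩⟩

/-- Quadrature for the smooth periodic kernel. -/
lemma KK_quad {L : ℝ} {l₁ l₂ : ℝ → ℂ} (hL : 0 < L) (h₁ : Crv L l₁) (h₂ : Crv L l₂) (m : ℕ) :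
    ∃ C, ∀ N : ℕ, 0 < N → ∀ t x : ℝ,
    ‖(N : ℂ)⁻¹ * ∑ k ∈ Finset.range N, KK L l₁ l₂ (x + k * (L / N), t)
      - (L : ℂ)⁻¹ * ∫ y in (0:ℝ)..L, KK L l₁ l₂ (y, t)‖ ≤ C / (N:ℝ) ^ m := by
  have hit := PP_iter _ (KK_smooth hL h₁ h₂) L (KK_per1 h₁ h₂) (KK_per2 h₁ h₂)
  obtain ⟨C, hC⟩ := bounded_per _ (hit m).1.continuous L hL (hit m).2.1 (hit m).2.2
  refine ⟨2 * C * L ^ m, fun N hN t x => ?_⟩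
  have := quad_periodic L hL N hN C m (fun j u => (PP^[j] (KK L l₁ l₂)) (u, t)) ?_ ?_ ?_ x
  · simp only [Function.iterate_zero, id] at this
    refine this.trans (le_of_eq ?_)
    rw [div_pow]; ring
  · intro j u
    have := hasDerivAt_fst (((hit j).1.differentiable (by simp)) (u, t))
    simp only [Function.iterate_succ', Function.comp_apply]
    exact this
  · intro j u
    have := (hit j).2.1 (u, t)
    simpa using this
  · intro u; exact hC _

lemma KK_int {L : ℝ} {l₁ l₂ : ℝ → ℂ} (hL : 0 < L) (h₁ : Crv L l₁) (h₂ : Crv L l₂) (t : ℝ) :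
    ∃ n : ℤ, ∫ y in (0:ℝ)..L, KK L l₁ l₂ (y, t) = n * (2 * π * Complex.I) := by
  have hc : Continuous (fun y => KK L l₁ l₂ (y, t)) :=
    (KK_smooth hL h₁ h₂).continuous.comp (by fun_prop)
  have hp : Function.Periodic (fun y => KK L l₁ l₂ (y, t)) L := fun u => by
    simpa using KK_per1 h₁ h₂ (u, t)
  have e := hp.intervalIntegral_add_eq 0 (-(L/2))
  rw [zero_add] at e
  rw [e]
  have e2 : -(L/2) + L = L/2 := by ring
  rw [e2]
  have hb : ∀ u ∈ Set.Icc (-(L/2)) (L/2), |u| < L := by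
    intro u hu
    rw [abs_lt]; constructor <;> linarith [hu.1, hu.2]
  refine int_of_ode (fun u => DD l₁ (u, t) / DD l₂ (u, t)) _ _ _ (by linarith) hc ?_ ?_ ?_
  · intro u hu
    have n1 := DD_ne hL h₁ (p := (u, t)) (hb u hu)
    have n2 := DD_ne hL h₂ (p := (u, t)) (hb u hu)
    refine ((DD_hasDeriv h₁.sm u t).fun_div (DD_hasDeriv h₂.sm u t) n2).congr_deriv ?_
    rw [KK_eq hL h₁ h₂ (hb u hu), RR, RR]
    field_simp
  · have : -(L/2) ∈ Set.Icc (-(L/2)) (L/2) := ⟨le_rfl, by linarith⟩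
    exact div_ne_zero (DD_ne hL h₁ (hb _ this)) (DD_ne hL h₂ (hb _ this))
  · have hh : ((L/2 : ℝ):ℂ) ≠ 0 := by
      have : L/2 ≠ 0 := by positivity
      exact_mod_cast this
    have key : ∀ l, Crv L l → DD l (L/2, t) = - DD l (-(L/2), t) := by
      intro l h
      have a1 := DD_mul h.sm (L/2) t
      have a2 := DD_mul h.sm (-(L/2)) t
      have a3 : l (t + -(L/2)) = l (t + L/2) := by
        rw [← h.per (t + -(L/2))]; congr 1; ring
      rw [a3, ← a1] at a2
      apply mul_left_cancel₀ hh
      rw [← a2]; push_cast; ring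
    simp only [key _ h₁, key _ h₂, neg_div_neg_eq]

lemma KK_const {L : ℝ} {l₁ l₂ : ℝ → ℂ} (hL : 0 < L) (h₁ : Crv L l₁) (h₂ : Crv L l₂) (t t' : ℝ) :
    ∫ y in (0:ℝ)..L, KK L l₁ l₂ (y, t) = ∫ y in (0:ℝ)..L, KK L l₁ l₂ (y, t') := by
  refine const_of_int (fun t => ∫ y in (0:ℝ)..L, KK L l₁ l₂ (y, t)) Set.univ isPreconnected_univ ?_
    (fun t _ => KK_int hL h₁ h₂ t) t t' trivial trivial
  refine Continuous.continuousOn ?_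
  refine intervalIntegral.continuous_parametric_intervalIntegral_of_continuous'
    (f := fun t y => KK L l₁ l₂ (y, t)) ?_ _ _
  exact (KK_smooth hL h₁ h₂).continuous.comp (by fun_prop : Continuous fun z : ℝ × ℝ => (z.2, z.1))


lemma param_cont (g g' : ℝ → ℂ) (hg : Continuous g) (hg' : Continuous g') (a b : ℝ) (hab : a ≤ b)
    (S : Set ℝ) (hS : ∀ ε ∈ S, ∀ u ∈ Set.Icc a b, g u ≠ (ε : ℂ)) :
    ContinuousOn (fun ε : ℝ => ∫ u in a..b, g' u / (g u - ε)) S := by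
  have e : ∀ ε : ℝ, ∫ u in a..b, g' u / (g u - ε) =
      ∫ u in a..b, g' (max a (min u b)) / (g (max a (min u b)) - ε) := by
    intro ε
    apply intervalIntegral.integral_congr
    intro u hu
    rw [Set.uIcc_of_le hab] at hu
    simp only [min_eq_left hu.2, max_eq_right hu.1]
  simp_rw [e]
  rw [continuousOn_iff_continuous_domRestrict]
  refine intervalIntegral.continuous_parametric_intervalIntegral_of_continuous'
    (f := fun (ε : S) u => g' (max a (min u b)) / (g (max a (min u b)) - ((ε : ℝ) : ℂ))) ?_ _ _
  refine Continuous.div ?_ ?_ ?_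
  · fun_prop
  · fun_prop
  · rintro ⟨ε, u⟩
    exact sub_ne_zero.2 (hS ε ε.2 _ ⟨le_max_left _ _, max_le hab (min_le_right _ _)⟩)

lemma jump (L : ℝ) (hL : 0 < L) (g g' k : ℝ → ℂ) (hd : ∀ u, HasDerivAt g (g' u) u)
    (hg' : Continuous g') (hk : Continuous k) (h0 : g 0 = 0) (hre : (g' 0).re = 0) (hne : g' 0 ≠ 0)
    (hp : Function.Periodic g L) (hp' : Function.Periodic g' L)
    (hε : ∀ ε : ℝ, 0 < ε → ε ≤ 1 → ∀ u, g u ≠ (ε : ℂ)) (hz : ∀ u ∈ Set.Ioo 0 L, g u ≠ 0)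
    (hsym : ∀ u ∈ Set.Ioo 0 L, (g' u / g u - k u) + (g' (L - u) / g (L - u) - k (L - u))
      = 2 * π * Complex.I / L) :
    |(∫ u in (0:ℝ)..L, g' u / (g u - 1)).im - (∫ u in (0:ℝ)..L, k u).im - π| ≤ π := by
  have hpi := Real.pi_pos
  have hLc : (L:ℂ) ≠ 0 := by exact_mod_cast hL.ne'
  have hg : Continuous g := continuous_iff_continuousAt.2 fun x => (hd x).continuousAt
  have him : (g' 0).im ≠ 0 := fun h => hne (Complex.ext hre h)
  set J := ∫ u in (0:ℝ)..L, g' u / (g u - 1) with hJ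
  -- constancy in ε
  have hconst : ∀ ε : ℝ, 0 < ε → ε ≤ 1 → ∫ u in (0:ℝ)..L, g' u / (g u - ε) = J := by
    intro ε h1 h2
    have := const_of_int (fun ε : ℝ => ∫ u in (0:ℝ)..L, g' u / (g u - ε)) (Set.Ioc 0 1)
      isPreconnected_Ioc (param_cont g g' hg hg' 0 L hL.le _ fun ε he u _ => hε ε he.1 he.2 u) ?_
      ε 1 ⟨h1, h2⟩ ⟨one_pos, le_rfl⟩
    · simpa using this
    · intro ε he
      have hn : ∀ u, g u - ε ≠ 0 := fun u => sub_ne_zero.2 (hε ε he.1 he.2 u)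
      refine int_of_ode (fun u => g u - ε) _ 0 L hL.le ?_ ?_ (hn 0) ?_
      · exact hg'.div (by fun_prop) hn
      · intro u _
        refine ((hd u).sub_const (ε:ℂ)).congr_deriv ?_
        have := hn u
        field_simp
      · have := hp 0
        rw [zero_add] at this
        simp [this]
  -- local nonvanishing of the imaginary part
  have him_d : HasDerivAt (fun u => (g u).im) (g' 0).im 0 :=
    (Complex.imCLM.hasFDerivAt.comp_hasDerivAt (0:ℝ) (hd 0))
  have hev := him_d.eventually_ne (c := 0) him
  rw [eventually_nhdsWithin_iff, Metric.eventually_nhds_iff] at hev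
  obtain ⟨δ₀, hδ₀, hδ⟩ := hev
  have hδ' : ∀ u : ℝ, |u| < δ₀ → u ≠ 0 → (g u).im ≠ 0 := by
    intro u hu hu0
    exact hδ (by simpa using hu) hu0
  -- formula for small δ
  have hform : ∀ δ : ℝ, 0 < δ → δ < δ₀ → δ < L / 2 →
      J.im = ((-g δ).arg - (-g (-δ)).arg) + (∫ u in δ..(L - δ), k u).im + π * (L - 2 * δ) / L := by
    intro δ h1 h2 h3
    have hIcc : ∀ u ∈ Set.Icc δ (L - δ), g u ≠ 0 := fun u hu => hz u ⟨by linarith [hu.1], by linarith [hu.2]⟩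
    have hJe : ∀ ε : ℝ, 0 < ε → ε ≤ 1 →
        J = (Complex.log (ε - g δ) - Complex.log (ε - g (-δ))) + ∫ u in δ..(L - δ), g' u / (g u - ε) := by
      intro ε e1 e2
      have hn : ∀ u, g u - ε ≠ 0 := fun u => sub_ne_zero.2 (hε ε e1 e2 u)
      have hc : Continuous fun u => g' u / (g u - ε) := hg'.div (by fun_prop) hn
      have hper : Function.Periodic (fun u => g' u / (g u - ε)) L := by
        intro u; simp only [hp u, hp' u]
      rw [← hconst ε e1 e2]
      have e3 := hper.intervalIntegral_add_eq 0 (-δ)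
      rw [zero_add] at e3
      rw [e3, show -δ + L = L - δ by ring,
        ← intervalIntegral.integral_add_adjacent_intervals (hc.intervalIntegrable (-δ) δ) (hc.intervalIntegrable δ (L - δ))]
      congr 1
      refine intervalIntegral.integral_eq_sub_of_hasDerivAt
        (f := fun u => Complex.log (ε - g u)) ?_ (hc.intervalIntegrable _ _)
      intro u hu
      rw [Set.uIcc_of_le (by linarith)] at hu
      have hs : (ε:ℂ) - g u ∈ Complex.slitPlane := by
        by_cases hu0 : u = 0
        · subst hu0; rw [h0, sub_zero]; exact Complex.ofReal_mem_slitPlane.2 e1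
        · right
          have := hδ' u (abs_lt.2 ⟨by linarith [hu.1], by linarith [hu.2]⟩) hu0
          simpa using this
      refine (((hd u).const_sub (ε:ℂ)).clog_real hs).congr_deriv ?_
      rw [← neg_sub (g u), neg_div_neg_eq]
    have hsl : ∀ u : ℝ, |u| < δ₀ → u ≠ 0 → (((0:ℝ):ℂ)) - g u ∈ Complex.slitPlane := by
      intro u hu hu0
      right
      simpa using hδ' u hu hu0
    have hδabs : |δ| < δ₀ := by rw [abs_of_pos h1]; exact h2
    have hδabs' : |(-δ)| < δ₀ := by rw [abs_neg]; exact hδabs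
    have hlog : ∀ w : ℂ, ((0:ℝ):ℂ) - w ∈ Complex.slitPlane →
        Filter.Tendsto (fun ε : ℝ => Complex.log (ε - w)) (nhdsWithin 0 (Set.Ioc 0 1))
          (nhds (Complex.log (((0:ℝ):ℂ) - w))) := by
      intro w hw
      have : ContinuousAt (fun ε : ℝ => Complex.log (ε - w)) 0 :=
        ContinuousAt.clog (by fun_prop) hw
      exact this.tendsto.mono_left nhdsWithin_le_nhds
    have hpc := param_cont g g' hg hg' δ (L - δ) (by linarith) (Set.Icc 0 1) (by
      intro ε he u hu
      rcases eq_or_lt_of_le he.1 with h | h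
      · rw [← h]; simpa using hIcc u hu
      · exact hε ε h he.2 u)
    have hlim2 : Filter.Tendsto (fun ε : ℝ => ∫ u in δ..(L - δ), g' u / (g u - ε))
        (nhdsWithin 0 (Set.Ioc 0 1)) (nhds (∫ u in δ..(L - δ), g' u / (g u - ((0:ℝ):ℂ)))) :=
      (hpc 0 ⟨le_rfl, zero_le_one⟩).tendsto.mono_left (nhdsWithin_mono _ Set.Ioc_subset_Icc_self)
    have hlim := ((hlog _ (hsl δ hδabs h1.ne')).sub (hlog _ (hsl (-δ) hδabs' (by simpa using h1.ne')))).add hlim2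
    have : (nhdsWithin (0:ℝ) (Set.Ioc 0 1)).NeBot := by
      rw [nhdsWithin_Ioc_eq_nhdsGT one_pos]; infer_instance
    have hJeq := tendsto_nhds_unique (tendsto_const_nhds (x := J)) (hlim.congr' (by
      filter_upwards [self_mem_nhdsWithin] with ε he
      exact (hJe ε he.1 he.2).symm))
    simp only [Complex.ofReal_zero, zero_sub, sub_zero] at hJeq
    -- the far integral
    have hcon : ContinuousOn (fun u => g' u / g u) (Set.uIcc δ (L - δ)) := by
      rw [Set.uIcc_of_le (by linarith)]
      exact hg'.continuousOn.div hg.continuousOn hIcc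
    have hii := hcon.intervalIntegrable (μ := volume)
    have hki := hk.intervalIntegrable (μ := volume) δ (L - δ)
    set φ : ℝ → ℂ := fun u => g' u / g u - k u with hφ
    have hφi : IntervalIntegrable φ volume δ (L - δ) := hii.sub hki
    have hrefl : ∫ u in δ..(L - δ), φ (L - u) = ∫ u in δ..(L - δ), φ u := by
      rw [intervalIntegral.integral_comp_sub_left]
      congr 1; ring
    have hφi' : IntervalIntegrable (fun u => φ (L - u)) volume δ (L - δ) := by
      have := (hφi.comp_sub_left L).symm
      convert this using 1; ring
    have hsum : ∫ u in δ..(L - δ), (φ u + φ (L - u)) = ∫ u in δ..(L - δ), 2 * π * Complex.I / L := by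
      apply intervalIntegral.integral_congr
      intro u hu
      rw [Set.uIcc_of_le (by linarith)] at hu
      exact hsym u ⟨by linarith [hu.1], by linarith [hu.2]⟩
    rw [intervalIntegral.integral_add hφi hφi', hrefl, intervalIntegral.integral_const] at hsum
    have hφv : ∫ u in δ..(L - δ), φ u = ((π * (L - 2 * δ) / L : ℝ) : ℂ) * Complex.I := by
      have : (2:ℂ) * ∫ u in δ..(L - δ), φ u = 2 * (((π * (L - 2 * δ) / L : ℝ) : ℂ) * Complex.I) := by
        rw [two_mul, hsum, Complex.real_smul]; push_cast; ring
      exact mul_left_cancel₀ two_ne_zero this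
    have hsplit : ∫ u in δ..(L - δ), g' u / g u = (∫ u in δ..(L - δ), φ u) + ∫ u in δ..(L - δ), k u := by
      rw [← intervalIntegral.integral_add hφi hki]
      congr 1; funext u; simp [hφ]
    rw [hJeq, hsplit, hφv]
    simp only [Complex.add_im, Complex.sub_im, Complex.log_im, Complex.im_ofReal_mul,
      Complex.I_im, mul_one]
    ring
  -- the limit δ → 0
  have hslope : Filter.Tendsto (fun δ : ℝ => δ⁻¹ • g δ) (nhdsWithin 0 {0}ᶜ) (nhds (g' 0)) := by
    have := (hd 0).tendsto_slope_zero
    simpa [h0] using this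
  have hmem1 : -(g' 0) ∈ Complex.slitPlane := by right; simpa using him
  have hmem2 : g' 0 ∈ Complex.slitPlane := by right; simpa using him
  have hpos : Filter.Tendsto (fun δ : ℝ => δ) (nhdsWithin 0 (Set.Ioi 0)) (nhdsWithin 0 {0}ᶜ) :=
    nhdsWithin_mono _ (fun x (hx : 0 < x) => hx.ne')
  have hneg : Filter.Tendsto (fun δ : ℝ => -δ) (nhdsWithin 0 (Set.Ioi 0)) (nhdsWithin 0 {0}ᶜ) := by
    apply tendsto_nhdsWithin_of_tendsto_nhds_of_eventually_within
    · have : Filter.Tendsto (fun δ : ℝ => -δ) (nhds 0) (nhds (-0)) := continuous_neg.tendsto 0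
      rw [neg_zero] at this
      exact this.mono_left nhdsWithin_le_nhds
    · filter_upwards [self_mem_nhdsWithin] with x hx
      have : (0:ℝ) < x := hx
      simp [this.ne']
  have ha1 : Filter.Tendsto (fun δ : ℝ => (-g δ).arg) (nhdsWithin 0 (Set.Ioi 0)) (nhds (-(g' 0)).arg) := by
    have := (Complex.continuousAt_arg hmem1).tendsto.comp (hslope.comp hpos).neg
    refine this.congr' ?_
    filter_upwards [self_mem_nhdsWithin] with x hx
    have hx' : (0:ℝ) < x⁻¹ := inv_pos.2 hx
    simp only [Function.comp]
    rw [← smul_neg, Complex.real_smul, Complex.arg_real_mul _ hx']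
  have ha2 : Filter.Tendsto (fun δ : ℝ => (-g (-δ)).arg) (nhdsWithin 0 (Set.Ioi 0)) (nhds (g' 0).arg) := by
    have := (Complex.continuousAt_arg hmem2).tendsto.comp (hslope.comp hneg)
    refine this.congr' ?_
    filter_upwards [self_mem_nhdsWithin] with x hx
    have hx' : (0:ℝ) < x⁻¹ := inv_pos.2 hx
    simp only [Function.comp]
    rw [inv_neg, neg_smul, ← smul_neg, Complex.real_smul, Complex.arg_real_mul _ hx']
  have ha3 : Filter.Tendsto (fun δ : ℝ => (∫ u in δ..(L - δ), k u).im) (nhdsWithin 0 (Set.Ioi 0))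
      (nhds (∫ u in (0:ℝ)..L, k u).im) := by
    have hc : Continuous (fun δ : ℝ => (∫ u in δ..(L - δ), k u)) := by
      have : (fun δ : ℝ => (∫ u in δ..(L - δ), k u)) =
          fun δ => (∫ u in (0:ℝ)..(L - δ), k u) - ∫ u in (0:ℝ)..δ, k u := by
        funext δ
        rw [intervalIntegral.integral_interval_sub_left (hk.intervalIntegrable _ _) (hk.intervalIntegrable _ _)]
      rw [this]
      have := intervalIntegral.continuous_primitive (fun a b => hk.intervalIntegrable (μ := volume) a b) 0
      exact (this.comp (by fun_prop)).sub this
    have := (Complex.continuous_im.comp hc).tendsto 0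
    simp only [Function.comp, sub_zero] at this
    exact this.mono_left nhdsWithin_le_nhds
  have ha4 : Filter.Tendsto (fun δ : ℝ => π * (L - 2 * δ) / L) (nhdsWithin 0 (Set.Ioi 0)) (nhds π) := by
    have hc : Continuous (fun δ : ℝ => π * (L - 2 * δ) / L) := by fun_prop
    have := hc.tendsto 0
    simp only [mul_zero, sub_zero] at this
    rw [mul_div_assoc, div_self hL.ne', mul_one] at this
    exact this.mono_left nhdsWithin_le_nhds
  have hfin := tendsto_nhds_unique (tendsto_const_nhds (x := J.im))
    ((((ha1.sub ha2).add ha3).add ha4).congr' (by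
      have : Set.Ioo 0 (min δ₀ (L/2)) ∈ nhdsWithin (0:ℝ) (Set.Ioi 0) :=
        Ioo_mem_nhdsGT (lt_min hδ₀ (by linarith))
      filter_upwards [this] with x hx
      exact (hform x hx.1 (hx.2.trans_le (min_le_left _ _)) (hx.2.trans_le (min_le_right _ _))).symm))
  have b1 : |(-(g' 0)).arg| ≤ π / 2 := Complex.abs_arg_le_pi_div_two_iff.2 (by simp [hre])
  have b2 : |(g' 0).arg| ≤ π / 2 := Complex.abs_arg_le_pi_div_two_iff.2 (by simp [hre])
  rw [hfin]
  rw [abs_le] at b1 b2 ⊢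
  constructor <;> linarith [b1.1, b1.2, b2.1, b2.2]


/-- The reference circle. -/
noncomputable def circ (L : ℝ) (s : ℝ) : ℂ := Complex.exp ((2 * π / L * s : ℝ) * Complex.I)

lemma circ_add (L s u : ℝ) : circ L (s + u) = circ L s * circ L u := by
  rw [circ, circ, circ, ← Complex.exp_add]; congr 1; push_cast; ring

lemma circ_ne (L s : ℝ) : circ L s ≠ 0 := Complex.exp_ne_zero _

lemma circ_L (L : ℝ) (hL : 0 < L) : circ L L = 1 := by
  rw [circ, div_mul_cancel₀ _ hL.ne']
  push_cast
  exact Complex.exp_two_pi_mul_I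

lemma circ_hasDeriv (L s : ℝ) :
    HasDerivAt (circ L) (2 * π * Complex.I / L * circ L s) s := by
  have h1 : HasDerivAt (fun s : ℝ => ((2 * π / L * s : ℝ) : ℂ) * Complex.I)
      (((2 * π / L * 1 : ℝ) : ℂ) * Complex.I) s :=
    (((hasDerivAt_id s).const_mul (2 * π / L)).ofReal_comp).mul_const _
  refine h1.cexp.congr_deriv ?_
  rw [circ]; push_cast; ring

lemma circ_eq_one {L u : ℝ} (hL : 0 < L) (h : circ L u = 1) : ∃ n : ℤ, u = n * L := by
  obtain ⟨n, hn⟩ := Complex.exp_eq_one_iff.1 h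
  refine ⟨n, ?_⟩
  have hpi := Real.pi_pos
  have := congrArg Complex.im hn
  simp only [Complex.im_ofReal_mul, Complex.I_im, mul_one] at this
  have e : ((n:ℂ) * (2 * π * Complex.I)).im = n * (2 * π) := by simp
  rw [e] at this
  field_simp at this
  linarith

lemma circ_crv (L : ℝ) (hL : 0 < L) : Crv L (circ L) where
  sm := by
    unfold circ
    have : ContDiff ℝ (⊤ : ℕ∞) (fun s : ℝ => ((2 * π / L * s : ℝ) : ℂ) * Complex.I) := by
      refine ContDiff.mul ?_ contDiff_const
      exact Complex.ofRealCLM.contDiff.comp (contDiff_const.mul contDiff_id)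
    exact this.cexp
  per s := by rw [circ_add, circ_L L hL, mul_one]
  inj t u h := by
    rw [circ_add] at h
    exact circ_eq_one hL (mul_left_cancel₀ (circ_ne L t) (by rw [h, mul_one]))
  dne s := by
    rw [(circ_hasDeriv L s).deriv]
    have hLc : (L:ℂ) ≠ 0 := by exact_mod_cast hL.ne'
    have hpi : (π:ℂ) ≠ 0 := by exact_mod_cast Real.pi_ne_zero
    exact mul_ne_zero (div_ne_zero (by simp) hLc) (circ_ne L s)

lemma QQ_circ (L u t : ℝ) :
    QQ (circ L) (u, t) = 2 * π * Complex.I / L * (circ L u / (circ L u - 1)) := by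
  have h1 := circ_ne L t
  rw [QQ]
  simp only
  rw [(circ_hasDeriv L _).deriv, circ_add]
  have : circ L t * circ L u - circ L t = circ L t * (circ L u - 1) := by ring
  rw [this, mul_div_assoc, mul_div_mul_left _ _ h1]

lemma QQ_circ_sym {L u : ℝ} (hL : 0 < L) (t : ℝ) (hu : ¬ ∃ n : ℤ, u = n * L) :
    QQ (circ L) (u, t) + QQ (circ L) (L - u, t) = 2 * π * Complex.I / L := by
  rw [QQ_circ, QQ_circ]
  have h1 : circ L u - 1 ≠ 0 := fun h => hu (circ_eq_one hL (sub_eq_zero.1 h))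
  have h2 := circ_ne L u
  have h3 : circ L (L - u) * circ L u = 1 := by
    rw [← circ_add, sub_add_cancel, circ_L L hL]
  have h4 : circ L (L - u) = (circ L u)⁻¹ := eq_inv_of_mul_eq_one_left h3
  rw [h4, ← mul_add]
  have h5 : circ L u / (circ L u - 1) + (circ L u)⁻¹ / ((circ L u)⁻¹ - 1) = 1 := by
    have e : (circ L u)⁻¹ - 1 = -((circ L u - 1) / circ L u) := by field_simp; ring
    rw [e]
    field_simp
    ring
  rw [h5, mul_one]

lemma not_mul_of_Ioo {L u : ℝ} (hL : 0 < L) (hu : u ∈ Set.Ioo 0 L) : ¬ ∃ n : ℤ, u = n * L := by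
  rintro ⟨n, hn⟩
  have h1 : (0:ℝ) < n := by
    have := hu.1; rw [hn] at this; exact pos_of_mul_pos_left this hL.le
  have h2 : (n:ℝ) < 1 := by
    have := hu.2; rw [hn] at this; nlinarith
  have h1' : (0:ℤ) < n := by exact_mod_cast h1
  have h2' : n < (1:ℤ) := by exact_mod_cast h2
  omega

/-- Jump relation for the winding number of a point off the curve. -/
lemma winding_near {L : ℝ} {l : ℝ → ℂ} (hL : 0 < L) (h : Crv L l) (p : ℂ) (hp : ∀ s, l s ≠ p) :
    ∃ t, |(∫ s in (0:ℝ)..L, deriv l s / (l s - p)).im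
      - (∫ u in (0:ℝ)..L, KK L l (circ L) (u, t)).im - π| ≤ π := by
  have hc : Continuous l := h.sm.continuous
  have hc' : Continuous (deriv l) := (smooth_deriv h.sm).continuous
  have hcr := circ_crv L hL
  obtain ⟨t, ht, hmin⟩ := (isCompact_Icc (a := (0:ℝ)) (b := L)).exists_isMinOn ⟨0, le_rfl, hL.le⟩
    (f := fun s => ‖l s - p‖) (by fun_prop)
  have hper : Function.Periodic l L := h.per
  have hmin' : ∀ s, ‖l t - p‖ ≤ ‖l s - p‖ := by
    intro s
    obtain ⟨s', hs', e⟩ := hper.exists_mem_Ico₀ hL s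
    rw [e]
    exact hmin ⟨hs'.1, hs'.2.le⟩
  refine ⟨t, ?_⟩
  set v := p - l t with hv
  have hv0 : v ≠ 0 := sub_ne_zero.2 (hp t).symm
  have hg1 : ∀ u, (l (t + u) - l t) / v - 1 = (l (t + u) - p) / v := by
    intro u; field_simp; rw [hv]; ring
  have hnorm : ∀ u, 1 ≤ ‖(l (t + u) - l t) / v - 1‖ := by
    intro u
    rw [hg1, norm_div, le_div_iff₀ (norm_pos_iff.2 hv0), one_mul, hv, norm_sub_rev]
    exact hmin' _
  have hd : ∀ u, HasDerivAt (fun u => (l (t + u) - l t) / v) (deriv l (t + u) / v) u := fun u =>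
    (((hasDerivAt_of_smooth h.sm (t + u)).comp_const_add t u).sub_const _).div_const v
  have hre : (deriv l (t + 0) / v).re = 0 := by
    have h1 : HasDerivAt (fun u => ((l (t + u) - l t) / v).re) (deriv l (t + 0) / v).re 0 :=
      Complex.reCLM.hasFDerivAt.comp_hasDerivAt (0:ℝ) (hd 0)
    have h2 : HasDerivAt (fun u => ((l (t + u) - l t) / v).im) (deriv l (t + 0) / v).im 0 :=
      Complex.imCLM.hasFDerivAt.comp_hasDerivAt (0:ℝ) (hd 0)
    have h3 := ((h1.sub_const 1).mul (h1.sub_const 1)).add (h2.mul h2)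
    have hm : IsLocalMin ((fun u => ((l (t + u) - l t) / v).re - 1) * (fun u => ((l (t + u) - l t) / v).re - 1)
      + (fun u => ((l (t + u) - l t) / v).im) * (fun u => ((l (t + u) - l t) / v).im)) 0 := by
      refine Filter.Eventually.of_forall fun u => ?_
      have := hnorm u
      have h4 : 1 ≤ ‖(l (t + u) - l t) / v - 1‖ ^ 2 := one_le_pow₀ this
      rw [← Complex.normSq_eq_norm_sq, Complex.normSq_apply] at h4
      simp only [Complex.sub_re, Complex.sub_im, Complex.one_re, Complex.one_im, sub_zero] at h4
      simpa using h4
    have h5 := hm.hasDerivAt_eq_zero h3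
    simp at h5
    simpa using h5
  have hz : ∀ u ∈ Set.Ioo 0 L, (l (t + u) - l t) ≠ 0 := fun u hu h0 =>
    not_mul_of_Ioo hL hu (h.inj t u (sub_eq_zero.1 h0))
  have key := jump L hL (fun u => (l (t + u) - l t) / v) (fun u => deriv l (t + u) / v)
    (fun u => KK L l (circ L) (u, t)) hd (by fun_prop)
    ((KK_smooth hL h hcr).continuous.comp (by fun_prop)) (by simp) hre
    (div_ne_zero (h.dne _) hv0)
    (fun u => by simp only [← add_assoc, h.per])
    (fun u => by simp only [← add_assoc, deriv_per h.per])
    ?_ (fun u hu => div_ne_zero (hz u hu) hv0) ?_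
  · have e : ∫ u in (0:ℝ)..L, deriv l (t + u) / v / ((l (t + u) - l t) / v - 1) =
        ∫ s in (0:ℝ)..L, deriv l s / (l s - p) := by
      have hp2 : Function.Periodic (fun s => deriv l s / (l s - p)) L := by
        intro s; simp only [h.per, deriv_per h.per]
      have e1 := hp2.intervalIntegral_add_eq 0 t
      rw [zero_add] at e1
      have e2 := intervalIntegral.integral_comp_add_left (a := 0) (b := L) (fun s => deriv l s / (l s - p)) t
      rw [add_zero] at e2
      rw [e1, ← e2]
      congr 1; funext u
      rw [hg1, div_div_div_cancel_right₀ hv0]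
    rwa [e] at key
  · intro ε h1 h2 u hu
    have := hnorm u
    rw [hu, ← Complex.ofReal_one, ← Complex.ofReal_sub, Complex.norm_real, Real.norm_eq_abs, le_abs] at this
    rcases this with h | h <;> linarith
  · intro u hu
    have hu' : L - u ∈ Set.Ioo 0 L := ⟨by linarith [hu.2], by linarith [hu.1]⟩
    have n1 := not_mul_of_Ioo hL hu
    have n2 := not_mul_of_Ioo hL hu'
    rw [← QQ_circ_sym hL t n1]
    simp only [div_div_div_cancel_right₀ hv0]
    have k1 : KK L l (circ L) (u, t) = QQ l (u, t) - QQ (circ L) (u, t) := by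
      rw [KK, if_neg n1]
    have k2 : KK L l (circ L) (L - u, t) = QQ l (L - u, t) - QQ (circ L) (L - u, t) := by
      rw [KK, if_neg n2]
    rw [k1, k2]
    simp only [QQ]
    ring

lemma mean_zero {L : ℝ} {l : ℝ → ℂ} (hL : 0 < L) (h : Crv L l) (harc : ∀ s, ‖deriv l s‖ = 1)
    (horient : ∃ z₀ : ℂ, (∀ s, l s ≠ z₀) ∧
      (∫ t in (0:ℝ)..L, deriv l t / (l t - z₀)) = 2 * (π : ℂ) * Complex.I) (t : ℝ) :
    ∫ u in (0:ℝ)..L, KK L l (circ L) (u, t) = 0 := by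
  have hpi := Real.pi_pos
  have hpi3 := Real.pi_gt_three
  have hc : Continuous l := h.sm.continuous
  have hc' : Continuous (deriv l) := (smooth_deriv h.sm).continuous
  have hcr := circ_crv L hL
  obtain ⟨n, hn⟩ := KK_int hL h hcr t
  have him : (∫ u in (0:ℝ)..L, KK L l (circ L) (u, t)).im = n * (2 * π) := by
    rw [hn]; simp
  obtain ⟨z₀, hz, hI⟩ := horient
  obtain ⟨t₁, h1⟩ := winding_near hL h z₀ hz
  rw [KK_const hL h hcr t₁ t, him, hI] at h1
  have e1 : (2 * (π:ℂ) * Complex.I).im = 2 * π := by simp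
  rw [e1, abs_le] at h1
  -- far point
  obtain ⟨R, hR⟩ := (isCompact_Icc (a := (0:ℝ)) (b := L)).exists_bound_of_continuousOn hc.continuousOn
  have hper : Function.Periodic l L := h.per
  have hR' : ∀ s, ‖l s‖ ≤ R := by
    intro s
    obtain ⟨s', hs', e⟩ := hper.exists_mem_Ico₀ hL s
    rw [e]; exact hR s' ⟨hs'.1, hs'.2.le⟩
  have hR0 : 0 ≤ R := (norm_nonneg _).trans (hR' 0)
  have hfar : ∀ s, L ≤ ‖l s - ((R + L : ℝ) : ℂ)‖ := by
    intro s
    have a := norm_sub_norm_le (((R + L : ℝ) : ℂ)) (l s)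
    rw [norm_sub_rev, Complex.norm_real, Real.norm_of_nonneg (by linarith)] at a
    linarith [hR' s]
  have hfar0 : ∀ s, l s - ((R + L : ℝ) : ℂ) ≠ 0 := fun s h0 => by
    have := hfar s
    rw [h0, norm_zero] at this
    linarith
  obtain ⟨t₂, h2⟩ := winding_near hL h ((R + L : ℝ) : ℂ) (fun s => sub_ne_zero.1 (hfar0 s))
  obtain ⟨m, hm⟩ := int_of_ode (fun s => l s - ((R + L : ℝ) : ℂ))
    (fun s => deriv l s / (l s - ((R + L : ℝ) : ℂ))) 0 L hL.le (hc'.div (by fun_prop) hfar0) (by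
      intro s _
      refine ((hasDerivAt_of_smooth h.sm s).sub_const _).congr_deriv ?_
      have := hfar0 s
      field_simp) (hfar0 0) (by
      have := h.per 0
      rw [zero_add] at this
      simp [this])
  have hb := intervalIntegral.norm_integral_le_of_norm_le_const (a := 0) (b := L) (C := 1 / L)
    (f := fun s => deriv l s / (l s - ((R + L : ℝ) : ℂ))) (by
      intro s _
      rw [norm_div, harc]
      exact one_div_le_one_div_of_le hL (hfar s))
  rw [sub_zero, abs_of_pos hL, one_div, inv_mul_cancel₀ hL.ne'] at hb
  have hm0 : m = 0 := by
    by_contra hne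
    have : (1:ℝ) ≤ |(m:ℝ)| := by exact_mod_cast Int.one_le_abs hne
    rw [hm] at hb
    simp only [norm_mul, Complex.norm_intCast, Complex.norm_ofNat, Complex.norm_real, Complex.norm_I,
      mul_one, Real.norm_of_nonneg hpi.le] at hb
    nlinarith
  rw [KK_const hL h hcr t₂ t, him, hm, hm0] at h2
  simp only [Int.cast_zero, zero_mul, Complex.zero_im] at h2
  rw [abs_le] at h2
  have hn1 : (0:ℝ) ≤ n := by nlinarith [h1.1, h1.2]
  have hn2 : (n:ℝ) ≤ 0 := by nlinarith [h2.1, h2.2]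
  have hn0 : n = 0 := by
    have a : (0:ℤ) ≤ n := by exact_mod_cast hn1
    have b : n ≤ (0:ℤ) := by exact_mod_cast hn2
    omega
  rw [hn, hn0]; simp


lemma chord_arc {L : ℝ} {l : ℝ → ℂ} (hL : 0 < L) (h : Crv L l) :
    ∃ c > 0, ∀ t u : ℝ, 0 ≤ u → u ≤ L → c * min u (L - u) ≤ ‖l (t + u) - l t‖ := by
  have hne : ((Set.Icc (-(L/2)) (L/2)) ×ˢ (Set.Icc (0:ℝ) L)).Nonempty :=
    ⟨(0, 0), ⟨by constructor <;> simp <;> linarith, by simp [hL.le]⟩⟩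
  obtain ⟨p, hp, hmin⟩ := ((isCompact_Icc (a := -(L/2)) (b := L/2)).prod
    (isCompact_Icc (a := (0:ℝ)) (b := L))).exists_isMinOn hne
    (f := fun p => ‖DD l p‖) (DD_smooth h.sm).continuous.norm.continuousOn
  have hc : 0 < ‖DD l p‖ := norm_pos_iff.2 (DD_ne hL h (by
    have := hp.1; rw [abs_lt]; constructor <;> linarith [this.1, this.2]))
  have hb : ∀ t u : ℝ, -(L/2) ≤ u → u ≤ L/2 → ‖DD l p‖ * |u| ≤ ‖l (t + u) - l t‖ := by
    intro t u h1 h2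
    have q2 : Function.Periodic (fun t => DD l (u, t)) L := fun t => by
      simpa using DD_per2 h.per (u, t)
    obtain ⟨t', ht', e⟩ := q2.exists_mem_Ico₀ hL t
    have e : DD l (u, t) = DD l (u, t') := e
    rw [← DD_mul h.sm, norm_mul, Complex.norm_real, Real.norm_eq_abs, mul_comm, e]
    apply mul_le_mul_of_nonneg_left _ (abs_nonneg u)
    exact hmin (show (u, t') ∈ _ from ⟨⟨h1, h2⟩, ⟨ht'.1, ht'.2.le⟩⟩)
  refine ⟨_, hc, fun t u h0 h1 => ?_⟩
  rcases le_total u (L/2) with h2 | h2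
  · have := hb t u (by linarith) h2
    rw [abs_of_nonneg h0] at this
    exact (mul_le_mul_of_nonneg_left (min_le_left _ _) hc.le).trans this
  · have := hb t (u - L) (by linarith) (by linarith)
    have e : l (t + (u - L)) = l (t + u) := by
      rw [← h.per (t + (u - L))]; congr 1; ring
    rw [abs_of_nonpos (by linarith), e, neg_sub] at this
    exact (mul_le_mul_of_nonneg_left (min_le_right _ _) hc.le).trans this

lemma sum_inv_sq (n : ℕ) : ∑ i ∈ Finset.range n, 1 / ((i:ℝ) + 1/2) ^ 2 ≤ 5 := by
  have key : ∀ n : ℕ, ∑ i ∈ Finset.range (n + 1), 1 / ((i:ℝ) + 1/2) ^ 2 ≤ 5 - 1 / ((n:ℝ) + 1) := by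
    intro n
    induction n with
    | zero => norm_num
    | succ n ih =>
      rw [Finset.sum_range_succ]
      have : 1 / ((((n + 1 : ℕ)):ℝ) + 1/2) ^ 2 ≤ 1 / ((n:ℝ) + 1) - 1 / (((n + 1 : ℕ):ℝ) + 1) := by
        push_cast
        rw [div_sub_div _ _ (by positivity) (by positivity), div_le_div_iff₀ (by positivity) (by positivity)]
        nlinarith
      linarith
  cases n with
  | zero => norm_num
  | succ n =>
    have : 0 ≤ 1 / ((n:ℝ) + 1) := by positivity
    linarith [key n]

lemma perturb {l : ℝ → ℂ} {Λ B η t x e : ℝ} (hlip : ∀ s s', ‖l s - l s'‖ ≤ |s - s'|)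
    (hΛ : ∀ s s', ‖deriv l s - deriv l s'‖ ≤ Λ * |s - s'|) (hΛ0 : 0 ≤ Λ)
    (harc : ∀ s, ‖deriv l s‖ = 1) (hx : |x - e| ≤ η) (hη : 0 < η)
    (hlow : 2 * η ≤ ‖l (t + e) - l t‖) (hup : ‖l (t + e) - l t‖ ≤ B) :
    ‖QQ l (x, t) - QQ l (e, t)‖ ≤ (2 + Λ * B) * η * (1 / ‖l (t + e) - l t‖ ^ 2) := by
  simp only [QQ]
  set fe := l (t + e) - l t with hfe
  set fx := l (t + x) - l t with hfx
  have hd : ‖fe - fx‖ ≤ η := by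
    have := hlip (t + e) (t + x)
    rw [hfe, hfx, sub_sub_sub_cancel_right]
    refine this.trans ?_
    rw [add_sub_add_left_eq_sub, abs_sub_comm]; exact hx
  have hd' : ‖deriv l (t + x) - deriv l (t + e)‖ ≤ Λ * η := by
    refine (hΛ _ _).trans (mul_le_mul_of_nonneg_left ?_ hΛ0)
    rw [add_sub_add_left_eq_sub]; exact hx
  have hfe0 : 0 < ‖fe‖ := by linarith
  have hfxl : ‖fe‖ / 2 ≤ ‖fx‖ := by
    have := norm_sub_norm_le fe fx
    linarith
  have hfx0 : 0 < ‖fx‖ := by linarith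
  have hfe1 : fe ≠ 0 := norm_pos_iff.1 hfe0
  have hfx1 : fx ≠ 0 := norm_pos_iff.1 hfx0
  have e1 : deriv l (t + x) / fx - deriv l (t + e) / fe =
      deriv l (t + x) * (fe - fx) / (fx * fe) + (deriv l (t + x) - deriv l (t + e)) / fe := by
    field_simp
    ring
  rw [e1]
  refine (norm_add_le _ _).trans ?_
  rw [norm_div, norm_mul, norm_mul, norm_div, harc, one_mul]
  have b1 : ‖fe - fx‖ / (‖fx‖ * ‖fe‖) ≤ 2 * η * (1 / ‖fe‖ ^ 2) := by
    calc ‖fe - fx‖ / (‖fx‖ * ‖fe‖) ≤ η / (‖fe‖ / 2 * ‖fe‖) := by gcongr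
      _ = _ := by field_simp
  have b2 : ‖deriv l (t + x) - deriv l (t + e)‖ / ‖fe‖ ≤ Λ * B * η * (1 / ‖fe‖ ^ 2) := by
    calc _ ≤ Λ * η / ‖fe‖ := by gcongr
      _ = Λ * ‖fe‖ * η * (1 / ‖fe‖ ^ 2) := by field_simp
      _ ≤ _ := by gcongr
  calc _ ≤ _ := add_le_add b1 b2
    _ = _ := by ring

lemma key_sum {L : ℝ} {l : ℝ → ℂ} (hL : 0 < L) (h : Crv L l) (harc : ∀ s, ‖deriv l s‖ = 1)
    (horient : ∃ z₀ : ℂ, (∀ s, l s ≠ z₀) ∧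
      (∫ t in (0:ℝ)..L, deriv l t / (l t - z₀)) = 2 * (π : ℂ) * Complex.I)
    (κ : ℕ) (hκ : 2 ≤ κ) (M : ℝ) (hM : 0 < M) :
    ∃ C > 0, ∃ N₀ : ℕ, 2 ≤ N₀ ∧ ∀ N : ℕ, N₀ ≤ N → ∀ (j : ℤ) (t : ℝ) (a : Fin N → ℝ),
      (∀ i : Fin N, |a i - t - (((i:ℕ):ℝ) - j + 1/2) * (L / N)| ≤ 2 * M / (N:ℝ) ^ (κ + 1)) →
      ‖((L / N : ℝ) : ℂ) * ∑ i, deriv l (a i) / (l (a i) - l t) - π * Complex.I‖ ≤ C / (N:ℝ) ^ κ := by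
  have hc : Continuous l := h.sm.continuous
  have hc' : Continuous (deriv l) := (smooth_deriv h.sm).continuous
  have hcr := circ_crv L hL
  have hLc : (L:ℂ) ≠ 0 := by exact_mod_cast hL.ne'
  have hper : Function.Periodic l L := h.per
  -- constants
  have hlip : ∀ s s', ‖l s - l s'‖ ≤ |s - s'| := by
    intro s s'
    have := Convex.norm_image_sub_le_of_norm_hasDerivWithin_le (f := l) (s := Set.univ) (C := 1)
        (fun z _ => (hasDerivAt_of_smooth h.sm z).hasDerivWithinAt) (fun z _ => (harc z).le) convex_univ
        (Set.mem_univ s') (Set.mem_univ s)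
    simpa using this
  have hsm2 := smooth_deriv h.sm
  have hp' : Function.Periodic (deriv l) L := deriv_per h.per
  have hp'' : Function.Periodic (deriv (deriv l)) L := deriv_per (deriv_per h.per)
  obtain ⟨Λ, hΛb⟩ := (isCompact_Icc (a := (0:ℝ)) (b := L)).exists_bound_of_continuousOn
    (smooth_deriv hsm2).continuous.continuousOn
  have hΛb' : ∀ s, ‖deriv (deriv l) s‖ ≤ Λ := by
    intro s
    obtain ⟨s', hs', e⟩ := hp''.exists_mem_Ico₀ hL s
    rw [e]; exact hΛb s' ⟨hs'.1, hs'.2.le⟩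
  have hΛ0 : 0 ≤ Λ := (norm_nonneg _).trans (hΛb' 0)
  have hΛ : ∀ s s', ‖deriv l s - deriv l s'‖ ≤ Λ * |s - s'| := by
    intro s s'
    have := Convex.norm_image_sub_le_of_norm_hasDerivWithin_le (f := deriv l) (s := Set.univ) (C := Λ)
        (fun z _ => (hasDerivAt_of_smooth hsm2 z).hasDerivWithinAt) (fun z _ => hΛb' z) convex_univ
        (Set.mem_univ s') (Set.mem_univ s)
    simpa using this
  obtain ⟨R, hR⟩ := (isCompact_Icc (a := (0:ℝ)) (b := L)).exists_bound_of_continuousOn hc.continuousOn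
  have hR' : ∀ s, ‖l s‖ ≤ R := by
    intro s
    obtain ⟨s', hs', e⟩ := hper.exists_mem_Ico₀ hL s
    rw [e]; exact hR s' ⟨hs'.1, hs'.2.le⟩
  have hR0 : 0 ≤ R := (norm_nonneg _).trans (hR' 0)
  obtain ⟨c, hc0, hca⟩ := chord_arc hL h
  obtain ⟨C₁, hC₁⟩ := KK_quad hL h hcr κ
  have hC₁0 : 0 ≤ C₁ := by
    have := hC₁ 1 one_pos 0 0
    have h2 := (norm_nonneg _).trans this
    simpa using h2
  set Q := (2 + Λ * (2 * R)) with hQ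
  have hQ0 : 0 < Q := by positivity
  refine ⟨L * C₁ + 20 * Q * M / (c ^ 2 * L), by positivity, max 2 ⌈8 * M / (c * L)⌉₊, le_max_left _ _, ?_⟩
  intro N hN j t a ha
  have hN2 : 2 ≤ N := (le_max_left _ _).trans hN
  have hNpos : 0 < N := by omega
  have hNr : (0:ℝ) < N := by exact_mod_cast hNpos
  have hNc : (N:ℂ) ≠ 0 := by exact_mod_cast hNpos.ne'
  have hN1 : (1:ℝ) ≤ N := by exact_mod_cast hNpos
  have hNbig : 8 * M / (c * L) ≤ N := (Nat.ceil_le).1 ((le_max_right _ _).trans hN)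
  set hh := L / N with hhh
  have hhpos : 0 < hh := by positivity
  have hNh : N * hh = L := by rw [hhh]; field_simp
  set η := 2 * M / (N:ℝ) ^ (κ + 1) with hη
  have hη0 : 0 < η := by positivity
  have hηle : 2 * η ≤ c * (hh / 2) := by
    have h1 : 8 * M ≤ N * (c * L) := by rwa [div_le_iff₀ (by positivity)] at hNbig
    have h2 : (N:ℝ) ≤ (N:ℝ) ^ κ := le_self_pow₀ hN1 (by omega)
    have h3 : 8 * M ≤ (N:ℝ) ^ κ * (c * L) := h1.trans (by gcongr)
    rw [hη, hhh, pow_succ]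
    have e1 : 2 * (2 * M / ((N:ℝ) ^ κ * N)) = (8 * M) / (2 * ((N:ℝ) ^ κ * N)) := by field_simp; ring
    have e2 : c * (L / N / 2) = ((N:ℝ) ^ κ * (c * L)) / (2 * ((N:ℝ) ^ κ * N)) := by field_simp
    rw [e1, e2]
    gcongr
  -- the ideal nodes
  set e : ℤ → ℝ := fun k => ((k:ℝ) + 1/2) * hh with he
  have heN : ∀ k, e (k + N) = e k + L := by
    intro k
    simp only [he]; push_cast; linear_combination hNh
  have hnot : ∀ k, ¬ ∃ n : ℤ, e k = n * L := by
    rintro k ⟨n, hn⟩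
    simp only [he] at hn
    rw [← hNh, ← mul_assoc] at hn
    have h1 := mul_right_cancel₀ hhpos.ne' hn
    have h2 : (2 * k + 1 : ℤ) = 2 * (n * N) := by
      have : (2 * k + 1 : ℝ) = 2 * (n * N) := by linarith
      exact_mod_cast this
    omega
  have heIcc : ∀ i : ℕ, i < N → 0 < e i ∧ e i < L ∧ L - e i = e ((N - 1 - i : ℕ)) ∧ hh / 2 ≤ e i := by
    intro i hi
    have h1 : (i:ℝ) + 1 ≤ N := by exact_mod_cast hi
    have h3 : ((N - 1 - i : ℕ) : ℝ) = N - 1 - i := by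
      rw [Nat.cast_sub (by omega), Nat.cast_sub (by omega)]; simp
    have h0 : (0:ℝ) ≤ i := by positivity
    simp only [he, Int.cast_natCast, h3]
    refine ⟨by positivity, ?_, ?_, ?_⟩
    · rw [← hNh]; apply mul_lt_mul_of_pos_right _ hhpos; linarith
    · rw [← hNh]; ring
    · nlinarith
  -- lower bounds
  set ψ : ℤ → ℝ := fun k => 1 / ‖l (t + e k) - l t‖ ^ 2 with hψ
  have hψper : ∀ k, ψ (k + N) = ψ k := by
    intro k
    simp only [hψ, heN, ← add_assoc, h.per]
  have hlow0 : ∀ i : ℕ, i < N → c * (hh / 2) ≤ ‖l (t + e i) - l t‖ := by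
    intro i hi
    obtain ⟨a1, a2, a3, a4⟩ := heIcc i hi
    refine le_trans ?_ (hca t (e i) a1.le a2.le)
    apply mul_le_mul_of_nonneg_left _ hc0.le
    refine le_min a4 ?_
    rw [a3]
    exact (heIcc _ (by omega)).2.2.2
  have hlow : ∀ k : ℤ, c * (hh / 2) ≤ ‖l (t + e k) - l t‖ := by
    intro k
    have hm0 : 0 ≤ k % N := Int.emod_nonneg _ (by omega)
    have hm1 : k % N < N := Int.emod_lt_of_pos _ (by omega)
    obtain ⟨i, hi⟩ := Int.eq_ofNat_of_zero_le hm0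
    have hiN : i < N := by omega
    have hk : k = i + (k / N) * N := by
      have := Int.emod_add_mul_ediv k N
      rw [hi] at this; linarith
    have : e k = e i + (k / N : ℤ) * L := by
      rw [← hNh]
      simp only [he]
      have : (k:ℝ) = i + ((k / N : ℤ) : ℝ) * N := by exact_mod_cast hk
      rw [this, Int.cast_natCast]; ring
    rw [this, ← add_assoc, hper.int_mul (k / N) (t + e i)]
    exact hlow0 i hiN
  have hψsum : ∑ i ∈ Finset.range N, ψ (i - j) ≤ 10 / (c ^ 2 * hh ^ 2) := by
    rw [sum_shift N ψ hψper j]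
    have hb : ∀ i ∈ Finset.range N, ψ i ≤ 1 / c ^ 2 * (1 / e i ^ 2 + 1 / e ((N - 1 - i : ℕ)) ^ 2) := by
      intro i hi
      rw [Finset.mem_range] at hi
      obtain ⟨a1, a2, a3, a4⟩ := heIcc i hi
      have a5 := (heIcc (N - 1 - i) (by omega)).1
      have a6 := hca t (e i) a1.le a2.le
      rw [a3] at a6
      have a7 : 0 < min (e i) (e ((N - 1 - i : ℕ))) := lt_min a1 a5
      calc ψ i ≤ 1 / (c * min (e i) (e ((N - 1 - i : ℕ)))) ^ 2 := by
            simp only [hψ]; gcongr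
        _ = 1 / c ^ 2 * (1 / (min (e i) (e ((N - 1 - i : ℕ)))) ^ 2) := by field_simp
        _ ≤ _ := by
          apply mul_le_mul_of_nonneg_left _ (by positivity)
          have p1 : 0 ≤ 1 / e i ^ 2 := by positivity
          have p2 : 0 ≤ 1 / e ((N - 1 - i : ℕ)) ^ 2 := by positivity
          rcases min_choice (e i) (e ((N - 1 - i : ℕ))) with hm | hm <;> rw [hm] <;> linarith
    refine (Finset.sum_le_sum hb).trans ?_
    rw [← Finset.mul_sum, Finset.sum_add_distrib,
      Finset.sum_range_reflect (fun i : ℕ => 1 / e i ^ 2) N]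
    have hs : ∑ i ∈ Finset.range N, 1 / e i ^ 2 ≤ 5 / hh ^ 2 := by
      have : ∀ i ∈ Finset.range N, 1 / e i ^ 2 = 1 / hh ^ 2 * (1 / ((i:ℝ) + 1/2) ^ 2) := by
        intro i _
        simp only [he, Int.cast_natCast, mul_pow]
        field_simp
      rw [Finset.sum_congr rfl this, ← Finset.mul_sum]
      calc _ ≤ 1 / hh ^ 2 * 5 := mul_le_mul_of_nonneg_left (sum_inv_sq N) (by positivity)
        _ = _ := by ring
    calc _ ≤ 1 / c ^ 2 * (5 / hh ^ 2 + 5 / hh ^ 2) := by gcongr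
      _ = _ := by field_simp; ring
  -- split of the sum
  have hpert : ‖∑ i : Fin N, deriv l (a i) / (l (a i) - l t) - ∑ i : Fin N, QQ l (e ((i:ℕ) - j), t)‖
      ≤ Q * η * (10 / (c ^ 2 * hh ^ 2)) := by
    rw [← Finset.sum_sub_distrib]
    have hb : ∀ i : Fin N, ‖deriv l (a i) / (l (a i) - l t) - QQ l (e ((i:ℕ) - j), t)‖
        ≤ Q * η * ψ ((i:ℕ) - j) := by
      intro i
      have := perturb (l := l) (Λ := Λ) (B := 2 * R) (η := η) (t := t) (x := a i - t)
        (e := e ((i:ℕ) - j)) hlip hΛ hΛ0 harc (by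
          have := ha i
          simp only [he]; push_cast; exact this) hη0 (hηle.trans (hlow _)) (by
          refine (norm_sub_le _ _).trans ?_
          linarith [hR' (t + e ((i:ℕ) - j)), hR' t])
      have e1 : QQ l (a i - t, t) = deriv l (a i) / (l (a i) - l t) := by
        simp [QQ]
      rw [e1] at this
      exact this
    refine (norm_sum_le_of_le _ fun i _ => hb i).trans ?_
    rw [← Finset.mul_sum]
    rw [Fin.sum_univ_eq_sum_range (fun i : ℕ => ψ ((i:ℤ) - j)) N]
    exact mul_le_mul_of_nonneg_left hψsum (by positivity)
  have hcircsum : ∑ i ∈ Finset.range N, QQ (circ L) (e ((i:ℕ) - j), t) = N * (π * Complex.I / L) := by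
    have hps : ∀ k, QQ (circ L) (e (k + N), t) = QQ (circ L) (e k, t) := by
      intro k
      rw [heN, QQ_circ, QQ_circ, hcr.per]
    rw [sum_shift N (fun k => QQ (circ L) (e k, t)) hps j]
    have h1 : ∑ i ∈ Finset.range N, (QQ (circ L) (e (i:ℕ), t) + QQ (circ L) (e ((N - 1 - i : ℕ)), t))
        = ∑ i ∈ Finset.range N, 2 * π * Complex.I / L := by
      apply Finset.sum_congr rfl
      intro i hi
      rw [Finset.mem_range] at hi
      rw [← (heIcc i hi).2.2.1]
      exact QQ_circ_sym hL t (hnot i)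
    rw [Finset.sum_add_distrib, Finset.sum_range_reflect (fun i : ℕ => QQ (circ L) (e i, t)) N,
      Finset.sum_const, Finset.card_range, nsmul_eq_mul, ← two_mul] at h1
    apply mul_left_cancel₀ (two_ne_zero (α := ℂ))
    rw [h1]; ring
  have hKsum := hC₁ N hNpos t ((1/2 - j) * hh)
  rw [mean_zero hL h harc horient t, mul_zero, sub_zero] at hKsum
  have hid : ∑ i : Fin N, QQ l (e ((i:ℕ) - j), t) =
      ∑ k ∈ Finset.range N, KK L l (circ L) ((1/2 - j) * hh + k * hh, t) + N * (π * Complex.I / L) := by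
    rw [← hcircsum, ← Finset.sum_add_distrib, Fin.sum_univ_eq_sum_range (fun i : ℕ => QQ l (e ((i:ℤ) - j), t)) N]
    apply Finset.sum_congr rfl
    intro i _
    have e1 : (1/2 - (j:ℝ)) * hh + i * hh = e ((i:ℕ) - j) := by
      simp only [he]; push_cast; ring
    rw [e1, KK, if_neg (hnot _)]
    ring
  have hhc : ((hh:ℝ):ℂ) = L / N := by rw [hhh]; push_cast; rfl
  have hfinal : (hh:ℂ) * ∑ i, deriv l (a i) / (l (a i) - l t) - π * Complex.I =
      hh * (∑ i : Fin N, deriv l (a i) / (l (a i) - l t) - ∑ i : Fin N, QQ l (e ((i:ℕ) - j), t))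
      + L * ((N:ℂ)⁻¹ * ∑ k ∈ Finset.range N, KK L l (circ L) ((1/2 - j) * hh + k * hh, t)) := by
    rw [hid, hhc]
    field_simp
    ring
  rw [hfinal]
  refine (norm_add_le _ _).trans ?_
  rw [norm_mul, norm_mul (L:ℂ), Complex.norm_real, Complex.norm_real, Real.norm_of_nonneg hhpos.le,
    Real.norm_of_nonneg hL.le]
  calc _ ≤ hh * (Q * η * (10 / (c ^ 2 * hh ^ 2))) + L * (C₁ / (N:ℝ) ^ κ) := by gcongr
    _ = _ := by
      rw [hη, hhh, pow_succ]
      field_simp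
      ring


lemma crv_of {L : ℝ} {l : ℝ → ℂ} (hL : 0 < L)
    (hsm : ContDiff ℝ (⊤ : ℕ∞) l) (hper : ∀ s, l (s + L) = l s)
    (harc : ∀ s, ‖deriv l s‖ = 1) (hinj : Set.InjOn l (Set.Ico 0 L)) : Crv L l where
  sm := hsm
  per := hper
  dne := fun s hs => by
    have := harc s
    rw [hs] at this
    simp at this
  inj := fun t u htu => by
    have hp : Function.Periodic l L := hper
    have e : ∀ x, l (toIcoMod hL 0 x) = l x := fun x => by
      have := hp.sub_zsmul_eq (x := x) (toIcoDiv hL 0 x)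
      exact this
    have m : ∀ x, toIcoMod hL 0 x ∈ Set.Ico 0 L := fun x => by
      simpa using toIcoMod_mem_Ico hL 0 x
    have hh := hinj (m (t + u)) (m t) (by rw [e, e, htu])
    refine ⟨toIcoDiv hL 0 (t + u) - toIcoDiv hL 0 t, ?_⟩
    simp only [toIcoMod, zsmul_eq_mul] at hh
    push_cast
    linarith

lemma Bmat_entry (l : ℝ → ℂ) {N : ℕ} (a b : Fin N → ℝ) (i j : Fin N) :
    Bmat l a b i j = (deriv l (a i) / (l (a i) - l (b j))).re := by
  simp only [Bmat, Matrix.of_apply, dotR, Complex.div_re, Complex.normSq_eq_norm_sq]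
  ring

lemma Amat_entry (l : ℝ → ℂ) {N : ℕ} (a b : Fin N → ℝ) (i j : Fin N) :
    Amat l a b i j = (deriv l (a i) / (l (a i) - l (b j))).im := by
  simp only [Amat, Matrix.of_apply, dotR, normalv, Complex.div_im, Complex.normSq_eq_norm_sq,
    Complex.mul_re, Complex.mul_im, Complex.neg_re, Complex.neg_im, Complex.I_re, Complex.I_im]
  ring

lemma avg_bound {N : ℕ} (z w : Fin N → ℝ) (c : ℝ) (hw : ∀ j, |w j| ≤ c) :
    |(N : ℝ)⁻¹ * ∑ j, w j * z j| ≤ c * l1norm z := by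
  rw [abs_mul, abs_of_nonneg (by positivity : (0:ℝ) ≤ (N : ℝ)⁻¹), l1norm, mul_left_comm,
    Finset.mul_sum]
  refine mul_le_mul_of_nonneg_left ?_ (by positivity)
  refine (Finset.abs_sum_le_sum_abs _ _).trans (Finset.sum_le_sum fun j _ => ?_)
  rw [abs_mul]
  exact mul_le_mul_of_nonneg_right (hw j) (abs_nonneg _)

lemma mean_bound {L : ℝ} {l : ℝ → ℂ} {N : ℕ} (a b : Fin N → ℝ) (c : ℝ)
    (hs : ∀ j, ‖((L / N : ℝ) : ℂ) * ∑ i, deriv l (a i) / (l (a i) - l (b j))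
      - π * Complex.I‖ ≤ c) (z : Fin N → ℝ) :
    |avg ((L / (N : ℝ)) • (Bmat l a b).mulVec z)|
        + |avg (fun i => (L / (N : ℝ)) * (Amat l a b).mulVec z i - π * z i)|
        ≤ 2 * c * l1norm z := by
  have h1 : avg ((L / (N : ℝ)) • (Bmat l a b).mulVec z)
      = (N : ℝ)⁻¹ * ∑ j, ((L / N) * ∑ i, Bmat l a b i j) * z j := by
    simp only [avg, Pi.smul_apply, smul_eq_mul, Matrix.mulVec, dotProduct, Finset.mul_sum,
      Finset.sum_mul]
    rw [Finset.sum_comm]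
    simp only [mul_assoc]
  have h2 : avg (fun i => (L / (N : ℝ)) * (Amat l a b).mulVec z i - π * z i)
      = (N : ℝ)⁻¹ * ∑ j, ((L / N) * (∑ i, Amat l a b i j) - π) * z j := by
    simp only [avg, Matrix.mulVec, dotProduct, Finset.mul_sum,
      Finset.sum_mul, sub_mul, Finset.sum_sub_distrib, mul_sub]
    rw [Finset.sum_comm]
    simp only [mul_assoc]
  have b1 : ∀ j, |(L / N) * ∑ i, Bmat l a b i j| ≤ c := fun j => by
    refine le_trans (le_of_eq ?_) ((Complex.abs_re_le_norm _).trans (hs j))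
    rw [Complex.sub_re, Complex.re_ofReal_mul, Complex.re_sum]
    simp [Bmat_entry]
  have b2 : ∀ j, |(L / N) * (∑ i, Amat l a b i j) - π| ≤ c := fun j => by
    refine le_trans (le_of_eq ?_) ((Complex.abs_im_le_norm _).trans (hs j))
    rw [Complex.sub_im, Complex.im_ofReal_mul, Complex.im_sum]
    simp [Amat_entry]
  rw [h1, h2]
  have := avg_bound z _ c b1
  have := avg_bound z _ c b2
  linarith

/-- Discretization of the identities `⟨Bφ⟩ = 0` and `⟨Aφ⟩ = π⟨φ⟩`. -/
theorem discretized_mean_identities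
    (L : ℝ) (hL : 0 < L) (l : ℝ → ℂ)
    (hsm : ContDiff ℝ (⊤ : ℕ∞) l) (hper : ∀ s, l (s + L) = l s)
    (harc : ∀ s, ‖deriv l s‖ = 1) (hinj : Set.InjOn l (Set.Ico 0 L))
    (horient : ∃ z₀ : ℂ, (∀ s, l s ≠ z₀) ∧
      (∫ t in (0:ℝ)..L, deriv l t / (l t - z₀)) = 2 * (π : ℂ) * Complex.I)
    (κ : ℕ) (hκ : 2 ≤ κ) (M : ℝ) (hM : 0 < M)
    (ms mst : (N : ℕ) → Fin N → ℝ)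
    (hms : ∀ N, 2 ≤ N → ∀ i : Fin N, ms N i ∈ Set.Ico (0:ℝ) L ∧
      |ms N i - ((i : ℕ) : ℝ) * L / (N : ℝ)| ≤ M / (N : ℝ) ^ (κ + 1))
    (hmst : ∀ N, 2 ≤ N → ∀ i : Fin N, mst N i ∈ Set.Ico (0:ℝ) L ∧
      |mst N i - (((i : ℕ) : ℝ) + 1/2) * L / (N : ℝ)| ≤ M / (N : ℝ) ^ (κ + 1)) :
    ∃ C > 0, ∃ N₀ : ℕ, ∀ N : ℕ, N₀ ≤ N → ∀ z : Fin N → ℝ,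
      (|avg ((L / (N : ℝ)) • (Bmat l (mst N) (ms N)).mulVec z)|
        + |avg (fun i => (L / (N : ℝ)) * (Amat l (mst N) (ms N)).mulVec z i - π * z i)|
        ≤ C / (N : ℝ) ^ κ * l1norm z) ∧
      (|avg ((L / (N : ℝ)) • (Bmat l (ms N) (mst N)).mulVec z)|
        + |avg (fun i => (L / (N : ℝ)) * (Amat l (ms N) (mst N)).mulVec z i - π * z i)|
        ≤ C / (N : ℝ) ^ κ * l1norm z) := by
  obtain ⟨C, hC, N₀, hN₀, H⟩ := key_sum hL (crv_of hL hsm hper harc hinj) harc horient κ hκ M hM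
  refine ⟨2 * C, by positivity, N₀, fun N hN z => ?_⟩
  have h2 : 2 ≤ N := hN₀.trans hN
  rw [show 2 * C / (N : ℝ) ^ κ = 2 * (C / (N : ℝ) ^ κ) by ring]
  refine ⟨mean_bound _ _ _ (fun j => H N hN ((j : ℕ) : ℤ) _ _ fun i => ?_) z,
    mean_bound _ _ _ (fun j => H N hN (((j : ℕ) : ℤ) + 1) _ _ fun i => ?_) z⟩
  · have e1 := abs_le.1 (hmst N h2 i).2
    have e2 := abs_le.1 (hms N h2 j).2
    have e3 : (((i:ℕ):ℝ) - (((j : ℕ) : ℤ) : ℝ) + 1/2) * (L / N)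
        = (((i : ℕ) : ℝ) + 1/2) * L / (N : ℝ) - ((j : ℕ) : ℝ) * L / (N : ℝ) := by
      push_cast
      ring
    have e4 : 2 * M / (N:ℝ) ^ (κ + 1) = M / (N:ℝ) ^ (κ + 1) + M / (N:ℝ) ^ (κ + 1) := by ring
    rw [e3, e4]
    exact abs_le.2 ⟨by linarith, by linarith⟩
  · have e1 := abs_le.1 (hms N h2 i).2
    have e2 := abs_le.1 (hmst N h2 j).2
    have e3 : (((i:ℕ):ℝ) - ((((j : ℕ) : ℤ) + 1 : ℤ) : ℝ) + 1/2) * (L / N)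
        = ((i : ℕ) : ℝ) * L / (N : ℝ) - (((j : ℕ) : ℝ) + 1/2) * L / (N : ℝ) := by
      push_cast
      ring
    have e4 : 2 * M / (N:ℝ) ^ (κ + 1) = M / (N:ℝ) ^ (κ + 1) + M / (N:ℝ) ^ (κ + 1) := by ring
    rw [e3, e4]
    exact abs_le.2 ⟨by linarith, by linarith⟩
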